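/- arXiv:1003.5072 — 2 statements merged into one kernel-verified Lean document; each statement's English description precedes it below -/
import Mathlib

section
/- Let n ≥ 1, t > 0, a ∈ ℝ and let 1 < q₁ < q₂ satisfy q₂ − 1 = e^{2t}(q₁ e^{−a} − 1). Then for every measurable function f : ℝ^n → ℝ with 0 < c ≤ f ≤ C for some constants c, C, one has ‖N_t f‖_{L^{q₂}(γ)} ≤ M^{n/2} · ‖T_{−a} f‖_{L^{q₁}(γ)}, where M = ( (q₁−1)/e^{−2t} )^{1−1/q₁} · ( (q₂−1)/e^{−a} )^{1/q₂−1} · ( (1−e^{−2t})/(q₂−q₁) )^{1/q₂−1/q₁} (dimensional hypercontractive bound for the Ornstein–Uhlenbeck semigroup). -/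
open MeasureTheory Real

noncomputable def gaussianMeasure (n : ℕ) : Measure (EuclideanSpace ℝ (Fin n)) :=
  volume.withDensity fun x => ENNReal.ofReal ((2 * π) ^ (-(n : ℝ) / 2) * Real.exp (-‖x‖ ^ 2 / 2))

/-- Ornstein-Uhlenbeck semigroup via the Mehler formula. -/
noncomputable def OU (n : ℕ) (t : ℝ) (f : EuclideanSpace ℝ (Fin n) → ℝ)
    (x : EuclideanSpace ℝ (Fin n)) : ℝ :=
  ∫ y, f (Real.exp (-t) • x + Real.sqrt (1 - Real.exp (-2 * t)) • y) ∂(gaussianMeasure n)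

/-- Dilation semigroup: `T_a f (x) = f (e^{a/2} x)`. -/
noncomputable def dilation (n : ℕ) (a : ℝ) (f : EuclideanSpace ℝ (Fin n) → ℝ)
    (x : EuclideanSpace ℝ (Fin n)) : ℝ :=
  f (Real.exp (a / 2) • x)

open ProbabilityTheory Filter Topology Set
open scoped RealInnerProductSpace ENNReal NNReal

/-!
Let `X`, `Y` be standard Gaussian vectors with correlation `ρ`. Jensen's inequality
`𝔼 J (F X, G Y) ≤ J (𝔼 F X, 𝔼 G Y)` holds for every `J` whose Hessian is nonpositive after its
off-diagonal entries are multiplied by `ρ`: let `F` and `G` evolve under the heat semigroup in small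
steps, where the second order Taylor term of `J` is nonpositive and the error is cubic in the square
root of the step. For `J (u, v) = u ^ α * v ^ β` this is a two-function form of
hypercontractivity. At the critical correlation, moving the Gaussian weights into the two functions
turns it into a sharp bound, in Lebesgue norms, for the form with the degenerate kernel
`exp (-‖b x - d y‖² / 2)`, in which `b` and `d` can be rescaled freely. The relation between `q₁`,
`q₂`, `a` and `t` says exactly that the Mehler kernel, with the Gaussian weights of the two norms
absorbed, is such a kernel, and duality concludes.
-/

/-! ### The Gaussian heat semigroup -/

section HeatSemigroup

variable {W V : Type*} [NormedAddCommGroup W] [NormedSpace ℝ W] [MeasurableSpace W]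
  [NormedAddCommGroup V]
  {ν : Measure W} {Φ : W → V} {v : ℝ}

/-- The heat semigroup generated by a Gaussian measure `ν`: the average of `Φ (x + √v z)` over
`z ∼ ν`. -/
noncomputable def heatAvg [NormedSpace ℝ V] (ν : Measure W) (v : ℝ) (Φ : W → V) (x : W) : V :=
  ∫ z, Φ (x + √v • z) ∂ν

lemma heatAvg_zero_left [NormedSpace ℝ V] [IsProbabilityMeasure ν] [CompleteSpace V] (x : W) :
    heatAvg ν 0 Φ x = Φ x := by
  simp [heatAvg]

lemma norm_heatAvg_le [NormedSpace ℝ V] [IsProbabilityMeasure ν] {C : ℝ}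
    (hC : ∀ x, ‖Φ x‖ ≤ C) (x : W) : ‖heatAvg ν v Φ x‖ ≤ C :=
  (norm_integral_le_of_norm_le_const (.of_forall fun _ => hC _)).trans_eq (by simp)

variable [BorelSpace W] [SecondCountableTopology W]

lemma integrable_comp_add_smul [IsFiniteMeasure ν] (hΦ : Continuous Φ) {C : ℝ}
    (hC : ∀ x, ‖Φ x‖ ≤ C) (r : ℝ) (x : W) : Integrable (fun z => Φ (x + r • z)) ν :=
  .of_bound (by fun_prop : Continuous fun z => Φ (x + r • z)).aestronglyMeasurable C
    (.of_forall fun _ => hC _)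

variable [NormedSpace ℝ V]

lemma map_smul_add_smul_prod_self [CompleteSpace W] [IsGaussian ν] (hν : ∫ z, z ∂ν = 0)
    {a b c : ℝ} (h : a ^ 2 + b ^ 2 = c ^ 2) :
    (ν.prod ν).map (fun p => a • p.1 + b • p.2) = ν.map (fun z => c • z) := by
  have hpair : (fun p : W × W => a • p.1 + b • p.2) =
      ⇑(a • ContinuousLinearMap.fst ℝ W W + b • ContinuousLinearMap.snd ℝ W W) := rfl
  have hsmul : (fun z : W => c • z) = ⇑(c • ContinuousLinearMap.id ℝ W) := rfl
  have : IsProbabilityMeasure ((ν.prod ν).map fun p : W × W => a • p.1 + b • p.2) :=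
    Measure.isProbabilityMeasure_map (by fun_prop)
  have : IsProbabilityMeasure (ν.map fun z => c • z) :=
    Measure.isProbabilityMeasure_map (by fun_prop)
  refine Measure.ext_of_charFunDual (funext fun ℓ => ?_)
  have hinl : (ℓ.comp (a • ContinuousLinearMap.fst ℝ W W + b • ContinuousLinearMap.snd ℝ W W)).comp
      (ContinuousLinearMap.inl ℝ W W) = a • ℓ := by ext; simp
  have hinr : (ℓ.comp (a • ContinuousLinearMap.fst ℝ W W + b • ContinuousLinearMap.snd ℝ W W)).comp
      (ContinuousLinearMap.inr ℝ W W) = b • ℓ := by ext; simp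
  have hid : ℓ.comp (c • ContinuousLinearMap.id ℝ W) = c • ℓ := by ext; simp
  have hgauss (r : ℝ) : charFunDual ν (r • ℓ) = Complex.exp (-(r ^ 2 * Var[ℓ; ν] / 2 : ℝ)) := by
    rw [IsGaussian.charFunDual_eq_of_integral_eq_zero hν]
    have : Var[⇑(r • ℓ); ν] = r ^ 2 * Var[ℓ; ν] := variance_const_mul r ℓ ν
    rw [this]
    push_cast
    ring_nf
  rw [hpair, hsmul, charFunDual_map, charFunDual_map, charFunDual_prod, hinl, hinr, hid, hgauss,
    hgauss, hgauss, ← Complex.exp_add, ← h]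
  push_cast
  ring_nf

lemma continuous_heatAvg [IsFiniteMeasure ν] (hΦ : Continuous Φ) {C : ℝ} (hC : ∀ x, ‖Φ x‖ ≤ C) :
    Continuous (heatAvg ν v Φ) :=
  continuous_of_dominated (fun x => (integrable_comp_add_smul hΦ hC _ x).aestronglyMeasurable)
    (fun _ => .of_forall fun _ => hC _) (integrable_const C) (.of_forall fun _ => by fun_prop)

lemma heatAvg_mem [IsProbabilityMeasure ν] [CompleteSpace V] (hΦ : Continuous Φ) {C : ℝ}
    (hC : ∀ x, ‖Φ x‖ ≤ C) {S : Set V} (hS : Convex ℝ S) (hSc : IsClosed S) (hmem : ∀ x, Φ x ∈ S)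
    (x : W) : heatAvg ν v Φ x ∈ S :=
  hS.integral_mem hSc (.of_forall fun _ => hmem _) (integrable_comp_add_smul hΦ hC _ x)

lemma heatAvg_heatAvg [CompleteSpace W] [IsGaussian ν] (hν : ∫ z, z ∂ν = 0)
    (hΦ : Continuous Φ) {C : ℝ} (hC : ∀ x, ‖Φ x‖ ≤ C) {u : ℝ} (hu : 0 ≤ u) (hv : 0 ≤ v) (x : W) :
    heatAvg ν u (heatAvg ν v Φ) x = heatAvg ν (u + v) Φ x := by
  have hlaw : (ν.prod ν).map (fun p => √u • p.1 + √v • p.2) = ν.map (fun z => √(u + v) • z) :=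
    map_smul_add_smul_prod_self hν (by rw [sq_sqrt hu, sq_sqrt hv, sq_sqrt (by positivity)])
  have hcont : Continuous fun z => Φ (x + z) := by fun_prop
  have hint : Integrable (fun p : W × W => Φ (x + √u • p.1 + √v • p.2)) (ν.prod ν) :=
    .of_bound (by fun_prop : Continuous _).aestronglyMeasurable C (.of_forall fun _ => hC _)
  calc heatAvg ν u (heatAvg ν v Φ) x
      = ∫ p, Φ (x + (√u • p.1 + √v • p.2)) ∂(ν.prod ν) := by
        simp only [← add_assoc]
        exact (integral_prod _ hint).symm
    _ = ∫ z, Φ (x + z) ∂(ν.prod ν).map (fun p => √u • p.1 + √v • p.2) :=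
        (integral_map (by fun_prop) hcont.aestronglyMeasurable).symm
    _ = heatAvg ν (u + v) Φ x := by
        rw [hlaw, integral_map (by fun_prop) hcont.aestronglyMeasurable, heatAvg]

lemma lipschitzWith_heatAvg [IsProbabilityMeasure ν] {L : ℝ≥0} (hL : LipschitzWith L Φ) {C : ℝ}
    (hC : ∀ x, ‖Φ x‖ ≤ C) : LipschitzWith L (heatAvg ν v Φ) := by
  refine LipschitzWith.of_dist_le_mul fun x y => ?_
  have hint := integrable_comp_add_smul (ν := ν) hL.continuous hC (√v)
  rw [dist_eq_norm, heatAvg, heatAvg, ← integral_sub (hint x) (hint y)]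
  refine (norm_integral_le_of_norm_le_const (C := L * dist x y) (.of_forall fun z => ?_)).trans_eq
    (by simp)
  rw [← dist_eq_norm]
  exact (hL.dist_le_mul _ _).trans_eq (by rw [dist_add_right])

lemma hasFDerivAt_heatAvg [IsProbabilityMeasure ν] {L : ℝ≥0} {C : ℝ} (hC : ∀ x, ‖Φ x‖ ≤ C)
    (hd : Differentiable ℝ Φ) (hL : LipschitzWith L Φ) (hd' : Continuous (fderiv ℝ Φ)) (x : W) :
    HasFDerivAt (heatAvg ν v Φ) (heatAvg ν v (fderiv ℝ Φ) x) x := by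
  refine hasFDerivAt_integral_of_dominated_of_fderiv_le (bound := fun _ => (L : ℝ))
    (F' := fun y z => fderiv ℝ Φ (y + √v • z)) univ_mem
    (.of_forall fun y => (integrable_comp_add_smul hd.continuous hC _ y).aestronglyMeasurable)
    (integrable_comp_add_smul hd.continuous hC _ x)
    (by fun_prop : Continuous fun z => fderiv ℝ Φ (x + √v • z)).aestronglyMeasurable
    (.of_forall fun z y _ => norm_fderiv_le_of_lipschitz ℝ hL) (integrable_const _)
    (.of_forall fun z y _ => ?_)
  exact (hasFDerivAt_comp_add_right (√v • z)).2 (hd _).hasFDerivAt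

end HeatSemigroup

/-! ### Second-order Taylor expansion on a compact convex set -/

section Taylor

variable {V : Type*} [NormedAddCommGroup V] [NormedSpace ℝ V]

/-- The remainder of the second-order Taylor expansion of `J` at `u`. -/
noncomputable def taylorRemainder (J : V → ℝ) (u w : V) : ℝ :=
  J w - J u - fderiv ℝ J u (w - u) - fderiv ℝ (fderiv ℝ J) u (w - u) (w - u) / 2

lemma taylorRemainder_self (J : V → ℝ) (u : V) : taylorRemainder J u u = 0 := by
  simp [taylorRemainder]

lemma hasFDerivAt_taylorRemainder {J : V → ℝ} {u y : V} (hu : ContDiffAt ℝ 2 J u)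
    (hy : DifferentiableAt ℝ J y) :
    HasFDerivAt (taylorRemainder J u)
      (fderiv ℝ J y - fderiv ℝ J u - fderiv ℝ (fderiv ℝ J) u (y - u)) y := by
  have hsub : HasFDerivAt (fun w => w - u) (ContinuousLinearMap.id ℝ V) y :=
    (hasFDerivAt_id y).sub_const u
  have hquad : HasFDerivAt (fun w => fderiv ℝ (fderiv ℝ J) u (w - u) (w - u) / 2)
      (fderiv ℝ (fderiv ℝ J) u (y - u)) y := by
    have := ((fderiv ℝ (fderiv ℝ J) u).hasFDerivAt.comp y hsub).clm_apply hsub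
    refine (this.mul_const (2⁻¹ : ℝ)).congr_fderiv ?_
    ext z
    have hsymm := hu.isSymmSndFDerivAt (by simp) z (y - u)
    simp only [smul_apply, add_apply, ContinuousLinearMap.comp_apply,
      ContinuousLinearMap.flip_apply, ContinuousLinearMap.id_apply, Function.comp_apply, hsymm,
      smul_eq_mul]
    ring
  have hlin := (fderiv ℝ J u).hasFDerivAt.comp y hsub
  exact ((hy.hasFDerivAt.sub_const (J u)).sub hlin).sub hquad

lemma exists_abs_taylorRemainder_le {J : V → ℝ} {S : Set V} (hS : IsCompact S)
    (hconv : Convex ℝ S) (hJ : ∀ u ∈ S, ContDiffAt ℝ 3 J u) :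
    ∃ K : ℝ≥0, ∀ u ∈ S, ∀ w ∈ S, |taylorRemainder J u w| ≤ K * ‖w - u‖ ^ 3 := by
  have h1 : ∀ u ∈ S, ContDiffAt ℝ 2 (fderiv ℝ J) u := fun u hu =>
    (hJ u hu).fderiv_right (by norm_num)
  have h2 : ∀ u ∈ S, ContDiffAt ℝ 1 (fderiv ℝ (fderiv ℝ J)) u := fun u hu =>
    (h1 u hu).fderiv_right (by norm_num)
  obtain ⟨K, hK⟩ := ContDiffOn.exists_lipschitzOnWith
    (fun u hu => (h2 u hu).contDiffWithinAt) one_ne_zero hconv hS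
  refine ⟨K, fun u hu w hw => ?_⟩
  have hsub {y z : V} (hy : y ∈ S) (hz : z ∈ segment ℝ u y) : z ∈ S :=
    hconv.segment_subset hu hy hz
  have hD2 : ∀ y ∈ S, ‖fderiv ℝ (fderiv ℝ J) y - fderiv ℝ (fderiv ℝ J) u‖ ≤ K * ‖y - u‖ :=
    fun y hy => hK.norm_sub_le hy hu
  have hD1 : ∀ y ∈ S, ‖fderiv ℝ J y - fderiv ℝ J u - fderiv ℝ (fderiv ℝ J) u (y - u)‖ ≤
      K * ‖y - u‖ * ‖y - u‖ := fun y hy =>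
    (convex_segment u y).norm_image_sub_le_of_norm_hasFDerivWithin_le'
      (fun z hz => ((h1 z (hsub hy hz)).differentiableAt
        (by norm_num)).hasFDerivAt.hasFDerivWithinAt)
      (fun z hz => (hD2 z (hsub hy hz)).trans
        (by gcongr; exact norm_sub_le_of_mem_segment hz))
      (left_mem_segment ℝ u y) (right_mem_segment ℝ u y)
  have hR := (convex_segment u w).norm_image_sub_le_of_norm_hasFDerivWithin_le
    (C := K * ‖w - u‖ * ‖w - u‖)
    (fun y hy => (hasFDerivAt_taylorRemainder ((hJ u hu).of_le (by norm_num))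
      ((hJ y (hsub hw hy)).differentiableAt (by norm_num))).hasFDerivWithinAt)
    (fun y hy => (hD1 y (hsub hw hy)).trans
      (by gcongr <;> exact norm_sub_le_of_mem_segment hy))
    (left_mem_segment ℝ u w) (right_mem_segment ℝ u w)
  rw [taylorRemainder_self, sub_zero, Real.norm_eq_abs] at hR
  exact hR.trans_eq (by ring)

lemma exists_le_second_order_of_near {J : V → ℝ} {S : Set V} (hS : IsCompact S)
    (hconv : Convex ℝ S) (hJ : ∀ u ∈ S, ContDiffAt ℝ 3 J u) :
    ∃ K : ℝ, ∀ u ∈ S, ∀ w ∈ S, ∀ (d : V) (r : ℝ), ‖w - u‖ ≤ r → ‖d‖ ≤ r → ‖w - u - d‖ ≤ r ^ 2 →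
      J w ≤ J u + fderiv ℝ J u (w - u) + fderiv ℝ (fderiv ℝ J) u d d / 2 + K * r ^ 3 := by
  obtain ⟨K, hK⟩ := exists_abs_taylorRemainder_le hS hconv hJ
  obtain ⟨B, hB⟩ := hS.exists_bound_of_continuousOn (f := fderiv ℝ (fderiv ℝ J)) fun u hu =>
    (((hJ u hu).fderiv_right (m := 2) (by norm_num)).fderiv_right (m := 0)
      (by norm_num)).continuousAt.continuousWithinAt
  refine ⟨K + B, fun u hu w hw d r hwr hdr hwd => ?_⟩
  set H := fderiv ℝ (fderiv ℝ J) u with hH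
  have : 0 ≤ r := (norm_nonneg _).trans hdr
  have hB0 : 0 ≤ B := (norm_nonneg _).trans (hB u hu)
  have hbil {a b : V} {α β : ℝ} (ha : ‖a‖ ≤ α) (hb : ‖b‖ ≤ β) : H a b ≤ B * α * β := by
    have hα : 0 ≤ α := (norm_nonneg _).trans ha
    calc H a b ≤ ‖H a b‖ := le_norm_self _
      _ ≤ ‖H‖ * ‖a‖ * ‖b‖ := H.le_opNorm₂ a b
      _ ≤ B * α * β := by gcongr; exact hB u hu
  have hsplit : H (w - u) (w - u) = H d d + H (w - u - d) (w - u) + H d (w - u - d) := by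
    simp only [map_sub, sub_apply]
    ring
  have hT : taylorRemainder J u w ≤ K * r ^ 3 :=
    (le_abs_self _).trans ((hK u hu w hw).trans (by gcongr))
  rw [taylorRemainder, ← hH, hsplit] at hT
  linarith [hbil hwd hwr, hbil hdr hwd]

end Taylor

/-! ### Jensen's inequality for Gaussian averages -/

section GaussianJensen

variable {W V : Type*} [NormedAddCommGroup W] [NormedSpace ℝ W] [NormedAddCommGroup V]
  [NormedSpace ℝ V]

/-- Maps with values in `S` that are `L`-Lipschitz together with their derivative, the latter
taking values in the prescribed set `𝒜` of linear maps. -/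
structure IsC11With (S : Set V) (𝒜 : Set (W →L[ℝ] V)) (L : ℝ≥0) (Ψ : W → V) : Prop where
  mem : ∀ x, Ψ x ∈ S
  differentiable : Differentiable ℝ Ψ
  fderiv_mem : ∀ x, fderiv ℝ Ψ x ∈ 𝒜
  lipschitz : LipschitzWith L Ψ
  lipschitz_fderiv : LipschitzWith L (fderiv ℝ Ψ)

namespace IsC11With

variable {S : Set V} {𝒜 : Set (W →L[ℝ] V)} {L : ℝ≥0} {Ψ : W → V}

lemma norm_sub_fderiv_le (hΨ : IsC11With S 𝒜 L Ψ) (x h : W) :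
    ‖Ψ (x + h) - Ψ x - fderiv ℝ Ψ x h‖ ≤ L * ‖h‖ ^ 2 := by
  have := (convex_segment x (x + h)).norm_image_sub_le_of_norm_hasFDerivWithin_le'
    (fun y _ => (hΨ.differentiable y).hasFDerivAt.hasFDerivWithinAt) (C := L * ‖h‖)
    (fun y hy => (hΨ.lipschitz_fderiv.norm_sub_le y x).trans
      (by gcongr; simpa using norm_sub_le_of_mem_segment hy))
    (left_mem_segment ℝ x (x + h)) (right_mem_segment ℝ x (x + h))
  simpa [pow_two, mul_assoc] using this

variable [MeasurableSpace W] [BorelSpace W] [SecondCountableTopology W] [CompleteSpace V]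
  {ν : Measure W} {v : ℝ}

protected lemma heatAvg [IsProbabilityMeasure ν] (hΨ : IsC11With S 𝒜 L Ψ) (hS : IsCompact S)
    (hconv : Convex ℝ S) (h𝒜 : IsClosed 𝒜) (h𝒜c : Convex ℝ 𝒜) :
    IsC11With S 𝒜 L (heatAvg ν v Ψ) := by
  obtain ⟨C, hC⟩ := hS.isBounded.exists_norm_le
  have hb x : ‖Ψ x‖ ≤ C := hC _ (hΨ.mem x)
  have hb' x : ‖fderiv ℝ Ψ x‖ ≤ L := norm_fderiv_le_of_lipschitz ℝ hΨ.lipschitz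
  have hd := hasFDerivAt_heatAvg (ν := ν) (v := v) hb hΨ.differentiable hΨ.lipschitz
    hΨ.lipschitz_fderiv.continuous
  have hfderiv : fderiv ℝ (heatAvg ν v Ψ) = heatAvg ν v (fderiv ℝ Ψ) :=
    funext fun x => (hd x).fderiv
  exact
    { mem := heatAvg_mem hΨ.differentiable.continuous hb hconv hS.isClosed hΨ.mem
      differentiable := fun x => (hd x).differentiableAt
      fderiv_mem := hfderiv ▸
        heatAvg_mem hΨ.lipschitz_fderiv.continuous hb' h𝒜c h𝒜 hΨ.fderiv_mem
      lipschitz := lipschitzWith_heatAvg hΨ.lipschitz hb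
      lipschitz_fderiv := hfderiv ▸ lipschitzWith_heatAvg hΨ.lipschitz_fderiv hb' }

lemma norm_sub_heatAvg_le [IsGaussian ν] [CompleteSpace W] (hΨ : IsC11With S 𝒜 L Ψ)
    (hS : IsCompact S) (x z : W) :
    ‖Ψ (x + √v • z) - heatAvg ν v Ψ x‖ ≤ L * √v * (‖z‖ + ∫ y, ‖y‖ ∂ν) := by
  obtain ⟨C, hC⟩ := hS.isBounded.exists_norm_le
  have hint := integrable_comp_add_smul (ν := ν) hΨ.differentiable.continuous
    (fun x => hC _ (hΨ.mem x)) (√v) x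
  have hnorm : Integrable (fun y => ‖y‖) ν := IsGaussian.integrable_id.norm
  calc ‖Ψ (x + √v • z) - heatAvg ν v Ψ x‖
      = ‖∫ y, (Ψ (x + √v • z) - Ψ (x + √v • y)) ∂ν‖ := by
        rw [integral_sub (integrable_const _) hint]
        simp [heatAvg]
    _ ≤ ∫ y, L * √v * (‖z‖ + ‖y‖) ∂ν := by
        refine norm_integral_le_of_norm_le (((integrable_const _).add hnorm).const_mul _)
          (.of_forall fun y => (hΨ.lipschitz.norm_sub_le _ _).trans ?_)
        rw [add_sub_add_left_eq_sub, ← smul_sub, norm_smul, norm_of_nonneg (sqrt_nonneg v),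
          mul_assoc]
        gcongr
        exact norm_sub_le z y
    _ = L * √v * (‖z‖ + ∫ y, ‖y‖ ∂ν) := by
        rw [integral_const_mul, integral_add (integrable_const _) hnorm]
        simp

lemma norm_sub_heatAvg_sub_fderiv_le [IsGaussian ν] [CompleteSpace W] (hν : ∫ z, z ∂ν = 0)
    (hΨ : IsC11With S 𝒜 L Ψ) (hS : IsCompact S) (hv : 0 ≤ v) (x z : W) :
    ‖Ψ (x + √v • z) - heatAvg ν v Ψ x - fderiv ℝ Ψ x (√v • z)‖ ≤
      L * v * (‖z‖ ^ 2 + ∫ y, ‖y‖ ^ 2 ∂ν) := by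
  obtain ⟨C, hC⟩ := hS.isBounded.exists_norm_le
  have hint := integrable_comp_add_smul (ν := ν) hΨ.differentiable.continuous
    (fun x => hC _ (hΨ.mem x)) (√v) x
  have hsq : Integrable (fun y => ‖y‖ ^ 2) ν :=
    IsGaussian.memLp_two_id.integrable_norm_pow (by norm_num)
  have hlin : Integrable (fun y => fderiv ℝ Ψ x (√v • y)) ν :=
    (fderiv ℝ Ψ x).integrable_comp (IsGaussian.integrable_id.smul (√v))
  have hcentred : ∫ y, fderiv ℝ Ψ x (√v • y) ∂ν = 0 := by
    have := (fderiv ℝ Ψ x).integral_comp_comm (IsGaussian.integrable_id (μ := ν))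
    simp_all [integral_smul]
  have hrem (y : W) : ‖Ψ (x + √v • y) - Ψ x - fderiv ℝ Ψ x (√v • y)‖ ≤ L * v * ‖y‖ ^ 2 :=
    (hΨ.norm_sub_fderiv_le x _).trans_eq
      (by rw [norm_smul, norm_of_nonneg (sqrt_nonneg v), mul_pow, sq_sqrt hv, mul_assoc])
  have hmean : heatAvg ν v Ψ x - Ψ x =
      ∫ y, (Ψ (x + √v • y) - Ψ x - fderiv ℝ Ψ x (√v • y)) ∂ν := by
    have hdiff : Integrable (fun y => Ψ (x + √v • y) - Ψ x) ν := hint.sub (integrable_const _)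
    rw [integral_sub hdiff hlin, hcentred, integral_sub hint (integrable_const _)]
    simp [heatAvg]
  calc ‖Ψ (x + √v • z) - heatAvg ν v Ψ x - fderiv ℝ Ψ x (√v • z)‖
      = ‖(Ψ (x + √v • z) - Ψ x - fderiv ℝ Ψ x (√v • z)) - (heatAvg ν v Ψ x - Ψ x)‖ := by
        congr 1; abel
    _ ≤ L * v * ‖z‖ ^ 2 + ∫ y, L * v * ‖y‖ ^ 2 ∂ν := by
        refine norm_sub_le_of_le (hrem z) (hmean ▸ ?_)
        exact norm_integral_le_of_norm_le (hsq.const_mul _) (.of_forall hrem)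
    _ = L * v * (‖z‖ ^ 2 + ∫ y, ‖y‖ ^ 2 ∂ν) := by
        rw [integral_const_mul, mul_add]

end IsC11With

lemma integral_le_of_le_add_clm_add {Ω : Type*} [MeasurableSpace Ω] [CompleteSpace V]
    {P : Measure Ω} [IsProbabilityMeasure P] {X : Ω → V} {j q r : Ω → ℝ} (hX : Integrable X P)
    (hj : Integrable j P) (hq : Integrable q P) (hr : Integrable r P) (hq0 : ∫ z, q z ∂P ≤ 0)
    {c : ℝ} {ℓ : V →L[ℝ] ℝ} (hle : ∀ z, j z ≤ c + ℓ (X z - ∫ y, X y ∂P) + q z + r z) :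
    ∫ z, j z ∂P ≤ c + ∫ z, r z ∂P := by
  have hsub : Integrable (fun z => X z - ∫ y, X y ∂P) P := hX.sub (integrable_const _)
  have hlin : Integrable (fun z => c + ℓ (X z - ∫ y, X y ∂P)) P :=
    (integrable_const c).add (ℓ.integrable_comp hsub)
  have hlinq : Integrable (fun z => c + ℓ (X z - ∫ y, X y ∂P) + q z) P := hlin.add hq
  have hzero : ∫ z, ℓ (X z - ∫ y, X y ∂P) ∂P = 0 := by
    rw [ℓ.integral_comp_comm hsub, integral_sub hX (integrable_const _)]
    simp
  calc ∫ z, j z ∂P ≤ ∫ z, (c + ℓ (X z - ∫ y, X y ∂P) + q z + r z) ∂P :=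
        integral_mono hj (hlinq.add hr) hle
    _ = c + ∫ z, q z ∂P + ∫ z, r z ∂P := by
        rw [integral_add hlinq hr, integral_add hlin hq,
          integral_add (integrable_const c) (ℓ.integrable_comp hsub), hzero]
        simp
    _ ≤ c + ∫ z, r z ∂P := by linarith

variable [MeasurableSpace W] [BorelSpace W] [SecondCountableTopology W] [CompleteSpace W]
  {ν : Measure W} [IsGaussian ν]

lemma integrable_bilin_clm_self (H : V →L[ℝ] V →L[ℝ] ℝ) (A : W →L[ℝ] V) :
    Integrable (fun z => H (A z) (A z)) ν := by
  have hsq : Integrable (fun z => ‖z‖ ^ 2) ν :=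
    IsGaussian.memLp_two_id.integrable_norm_pow (by norm_num)
  refine (hsq.const_mul (‖H‖ * ‖A‖ ^ 2)).mono'
    (by fun_prop : Continuous fun z => H (A z) (A z)).aestronglyMeasurable (.of_forall fun z => ?_)
  calc ‖H (A z) (A z)‖ ≤ ‖H‖ * (‖A‖ * ‖z‖) * (‖A‖ * ‖z‖) :=
        H.le_of_opNorm₂_le_of_le le_rfl (A.le_opNorm z) (A.le_opNorm z)
    _ = ‖H‖ * ‖A‖ ^ 2 * ‖z‖ ^ 2 := by ring

variable [CompleteSpace V] {S : Set V} {𝒜 : Set (W →L[ℝ] V)} {J : V → ℝ}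

lemma exists_integrable_norm_sub_heatAvg_le (hν : ∫ z, z ∂ν = 0) (hS : IsCompact S) (L : ℝ≥0) :
    ∃ R : W → ℝ, Integrable (fun z => R z ^ 3) ν ∧ ∀ Ψ, IsC11With S 𝒜 L Ψ → ∀ v, 0 ≤ v → ∀ x z,
      ‖Ψ (x + √v • z) - heatAvg ν v Ψ x‖ ≤ √v * R z ∧
      ‖fderiv ℝ Ψ x (√v • z)‖ ≤ √v * R z ∧
      ‖Ψ (x + √v • z) - heatAvg ν v Ψ x - fderiv ℝ Ψ x (√v • z)‖ ≤ (√v * R z) ^ 2 := by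
  set m₁ := ∫ y, ‖y‖ ∂ν
  set m₂ := ∫ y, ‖y‖ ^ 2 ∂ν
  have hm₁ : 0 ≤ m₁ := integral_nonneg fun _ => norm_nonneg _
  have hm₂ : 0 ≤ m₂ := integral_nonneg fun _ => by positivity
  refine ⟨fun z => (1 + L) * (‖z‖ + (1 + m₁ + m₂)), ?_, fun Ψ hΨ v hv x z => ⟨?_, ?_, ?_⟩⟩
  · have hmem : MemLp (fun z : W => (1 + L : ℝ) * (‖z‖ + (1 + m₁ + m₂))) 3 ν :=
      ((IsGaussian.memLp_id ν 3 (by simp)).norm.add (memLp_const _)).const_mul _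
    exact (hmem.integrable_norm_pow (by norm_num)).congr
      (.of_forall fun z => by beta_reduce; rw [norm_of_nonneg (by positivity)])
  · calc _ ≤ L * √v * (‖z‖ + m₁) := hΨ.norm_sub_heatAvg_le hS x z
      _ = √v * (L * (‖z‖ + m₁)) := by ring
      _ ≤ √v * ((1 + L) * (‖z‖ + (1 + m₁ + m₂))) := by gcongr <;> linarith
  · calc _ ≤ L * ‖√v • z‖ := (fderiv ℝ Ψ x).le_of_opNorm_le
          (norm_fderiv_le_of_lipschitz ℝ hΨ.lipschitz) _
      _ = √v * (L * ‖z‖) := by rw [norm_smul, norm_of_nonneg (sqrt_nonneg v)]; ring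
      _ ≤ √v * ((1 + L) * (‖z‖ + (1 + m₁ + m₂))) := by gcongr <;> linarith
  · calc _ ≤ L * v * (‖z‖ ^ 2 + m₂) := hΨ.norm_sub_heatAvg_sub_fderiv_le hν hS hv x z
      _ = v * (L * (‖z‖ ^ 2 + m₂)) := by ring
      _ ≤ v * ((1 + L) ^ 2 * (‖z‖ + (1 + m₁ + m₂)) ^ 2) := by
        have := L.coe_nonneg
        have := norm_nonneg z
        gcongr <;> nlinarith [mul_nonneg this hm₁, mul_nonneg this hm₂]
      _ = _ := by rw [mul_pow, sq_sqrt hv, mul_pow]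

lemma exists_heatAvg_comp_le (hν : ∫ z, z ∂ν = 0) (hS : IsCompact S) (hconv : Convex ℝ S)
    (hJ : ∀ u ∈ S, ContDiffAt ℝ 3 J u)
    (hneg : ∀ u ∈ S, ∀ A ∈ 𝒜, ∫ z, fderiv ℝ (fderiv ℝ J) u (A z) (A z) ∂ν ≤ 0) (L : ℝ≥0) :
    ∃ K : ℝ, ∀ Ψ, IsC11With S 𝒜 L Ψ → ∀ v, 0 ≤ v → ∀ x,
      heatAvg ν v (J ∘ Ψ) x ≤ J (heatAvg ν v Ψ x) + K * √v ^ 3 := by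
  obtain ⟨K, hK⟩ := exists_le_second_order_of_near hS hconv hJ
  obtain ⟨R, hRint, hR⟩ := exists_integrable_norm_sub_heatAvg_le (𝒜 := 𝒜) hν hS L
  obtain ⟨C, hC⟩ := hS.isBounded.exists_norm_le
  have hJS : ContinuousOn J S := fun u hu => (hJ u hu).continuousAt.continuousWithinAt
  refine ⟨K * ∫ z, R z ^ 3 ∂ν, fun Ψ hΨ v hv x => ?_⟩
  set u := heatAvg ν v Ψ x
  have hcont := hΨ.differentiable.continuous
  have hb x : ‖Ψ x‖ ≤ C := hC _ (hΨ.mem x)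
  have hΨint := integrable_comp_add_smul (ν := ν) hcont hb (√v) x
  have hJΨ : Integrable (fun z => J (Ψ (x + √v • z))) ν := by
    obtain ⟨B, hB⟩ := hS.exists_bound_of_continuousOn hJS
    exact integrable_comp_add_smul (Φ := J ∘ Ψ) (hJS.comp_continuous hcont hΨ.mem)
      (fun x => hB _ (hΨ.mem x)) _ x
  have huS : u ∈ S := heatAvg_mem hcont hb hconv hS.isClosed hΨ.mem x
  have hle (z : W) : J (Ψ (x + √v • z)) ≤ J u + fderiv ℝ J u (Ψ (x + √v • z) - u) +
      v / 2 * fderiv ℝ (fderiv ℝ J) u (fderiv ℝ Ψ x z) (fderiv ℝ Ψ x z) +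
      K * √v ^ 3 * R z ^ 3 := by
    obtain ⟨h₁, h₂, h₃⟩ := hR Ψ hΨ v hv x z
    refine (hK u huS _ (hΨ.mem _) _ _ h₁ h₂ h₃).trans_eq ?_
    simp only [map_smul, smul_apply, smul_eq_mul, ← mul_assoc, mul_self_sqrt hv]
    ring
  refine (integral_le_of_le_add_clm_add hΨint hJΨ ((integrable_bilin_clm_self _ _).const_mul _)
    (hRint.const_mul _) ?_ hle).trans_eq ?_
  · rw [integral_const_mul]
    exact mul_nonpos_of_nonneg_of_nonpos (by positivity) (hneg u huS _ (hΨ.fderiv_mem x))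
  · rw [integral_const_mul]
    ring

lemma heatAvg_comp_le_of_step (hν : ∫ z, z ∂ν = 0) (hS : IsCompact S) (hconv : Convex ℝ S)
    (h𝒜 : IsClosed 𝒜) (h𝒜c : Convex ℝ 𝒜) (hJ : ContinuousOn J S) {L : ℝ≥0} {v e : ℝ} (hv : 0 ≤ v)
    (hstep : ∀ Ψ, IsC11With S 𝒜 L Ψ → ∀ x,
      heatAvg ν v (J ∘ Ψ) x ≤ J (heatAvg ν v Ψ x) + e) (k : ℕ) :
    ∀ Ψ, IsC11With S 𝒜 L Ψ → ∀ x,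
      heatAvg ν (k * v) (J ∘ Ψ) x ≤ J (heatAvg ν (k * v) Ψ x) + k * e := by
  induction k with
  | zero => simp [heatAvg_zero_left]
  | succ k ih =>
    intro Ψ hΨ x
    obtain ⟨C, hC⟩ := hS.isBounded.exists_norm_le
    obtain ⟨B, hB⟩ := hS.exists_bound_of_continuousOn hJ
    have hJc {Φ : W → V} (hΦ : IsC11With S 𝒜 L Φ) : Continuous (J ∘ Φ) :=
      hJ.comp_continuous hΦ.differentiable.continuous hΦ.mem
    have hJb {Φ : W → V} (hΦ : IsC11With S 𝒜 L Φ) (y : W) : ‖(J ∘ Φ) y‖ ≤ B := hB _ (hΦ.mem y)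
    have hPΨ : IsC11With S 𝒜 L (heatAvg ν v Ψ) := hΨ.heatAvg hS hconv h𝒜 h𝒜c
    have hkv : 0 ≤ k * v := by positivity
    have hint : Integrable (fun z => (J ∘ heatAvg ν v Ψ) (x + √(k * v) • z)) ν :=
      integrable_comp_add_smul (hJc hPΨ) (hJb hPΨ) _ x
    have hint' : Integrable (fun z => heatAvg ν v (J ∘ Ψ) (x + √(k * v) • z)) ν :=
      integrable_comp_add_smul (continuous_heatAvg (hJc hΨ) (hJb hΨ)) (norm_heatAvg_le (hJb hΨ)) _ x
    calc heatAvg ν (↑(k + 1) * v) (J ∘ Ψ) x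
        = heatAvg ν (k * v) (heatAvg ν v (J ∘ Ψ)) x := by
          rw [heatAvg_heatAvg hν (hJc hΨ) (hJb hΨ) hkv hv]
          push_cast
          ring_nf
      _ ≤ ∫ z, ((J ∘ heatAvg ν v Ψ) (x + √(k * v) • z) + e) ∂ν :=
          integral_mono hint' (hint.add (integrable_const e)) fun z => hstep Ψ hΨ _
      _ = heatAvg ν (k * v) (J ∘ heatAvg ν v Ψ) x + e := by
          rw [integral_add hint (integrable_const e)]
          simp [heatAvg]
      _ ≤ J (heatAvg ν (k * v) (heatAvg ν v Ψ) x) + k * e + e := by gcongr; exact ih _ hPΨ x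
      _ = J (heatAvg ν (↑(k + 1) * v) Ψ x) + ↑(k + 1) * e := by
          rw [heatAvg_heatAvg hν hΨ.differentiable.continuous (fun y => hC _ (hΨ.mem y)) hkv hv]
          push_cast
          ring_nf

/-- `J` need not be concave: only the second derivatives of `J ∘ Ψ` that the heat flow sees have a
sign. The `N + 1` heat steps of length `1 / (N + 1)` lose `K * (1 / (N + 1)) ^ (3 / 2)` each. -/
theorem integral_comp_le_of_isC11With (hν : ∫ z, z ∂ν = 0) (hS : IsCompact S) (hconv : Convex ℝ S)
    (h𝒜 : IsClosed 𝒜) (h𝒜c : Convex ℝ 𝒜) (hJ : ∀ u ∈ S, ContDiffAt ℝ 3 J u)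
    (hneg : ∀ u ∈ S, ∀ A ∈ 𝒜, ∫ z, fderiv ℝ (fderiv ℝ J) u (A z) (A z) ∂ν ≤ 0) {L : ℝ≥0}
    {Ψ : W → V} (hΨ : IsC11With S 𝒜 L Ψ) :
    ∫ z, J (Ψ z) ∂ν ≤ J (∫ z, Ψ z ∂ν) := by
  obtain ⟨K, hK⟩ := exists_heatAvg_comp_le hν hS hconv hJ hneg L
  have hJS : ContinuousOn J S := fun u hu => (hJ u hu).continuousAt.continuousWithinAt
  have hbound (N : ℕ) : ∫ z, J (Ψ z) ∂ν ≤ J (∫ z, Ψ z ∂ν) + K * √(1 / ((N : ℝ) + 1)) := by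
    have hv : (0 : ℝ) ≤ 1 / ((N : ℝ) + 1) := by positivity
    have h := heatAvg_comp_le_of_step hν hS hconv h𝒜 h𝒜c hJS hv
      (fun Φ hΦ x => hK Φ hΦ _ hv x) (N + 1) Ψ hΨ 0
    have hN : ((N + 1 : ℕ) : ℝ) * (1 / ((N : ℝ) + 1)) = 1 := by push_cast; field_simp
    have hcube : √(1 / ((N : ℝ) + 1)) ^ 3 = 1 / ((N : ℝ) + 1) * √(1 / ((N : ℝ) + 1)) := by
      rw [pow_succ, sq_sqrt hv]
    rw [hN, hcube, mul_left_comm K, ← mul_assoc, hN] at h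
    simpa [heatAvg] using h
  have hlim : Tendsto (fun N : ℕ => J (∫ z, Ψ z ∂ν) + K * √(1 / ((N : ℝ) + 1))) atTop
      (𝓝 (J (∫ z, Ψ z ∂ν) + K * √0)) :=
    tendsto_const_nhds.add (tendsto_const_nhds.mul
      (continuous_sqrt.continuousAt.tendsto.comp tendsto_one_div_add_atTop_nhds_zero_nat))
  simpa using ge_of_tendsto' hlim hbound

end GaussianJensen

/-! ### Mollification -/

section Mollification

open scoped Convolution
open ContinuousLinearMap (lsmul)

variable {E : Type*} [NormedAddCommGroup E] [InnerProductSpace ℝ E] [FiniteDimensional ℝ E]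
  [MeasurableSpace E] [BorelSpace E] {F : E → ℝ} {c C : ℝ}

lemma locallyIntegrable_of_norm_le (hF : Measurable F) (hC : ∀ x, ‖F x‖ ≤ C) :
    LocallyIntegrable F :=
  (locallyIntegrable_const C).mono hF.aestronglyMeasurable
    (.of_forall fun x => (hC x).trans (le_norm_self C))

lemma norm_convolution_le {U U' : Type*} [NormedAddCommGroup U] [NormedSpace ℝ U]
    [NormedAddCommGroup U'] [NormedSpace ℝ U'] (B : U →L[ℝ] ℝ →L[ℝ] U') {g : E → U}
    (hg : Integrable g) (hC : ∀ x, ‖F x‖ ≤ C) (x : E) :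
    ‖(g ⋆[B, volume] F) x‖ ≤ ‖B‖ * C * ∫ y, ‖g y‖ := by
  rw [convolution_def, ← integral_const_mul]
  refine norm_integral_le_of_norm_le (hg.norm.const_mul _) (.of_forall fun y => ?_)
  calc ‖B (g y) (F (x - y))‖ ≤ ‖B‖ * ‖g y‖ * C := B.le_of_opNorm₂_le_of_le le_rfl le_rfl (hC _)
    _ = ‖B‖ * C * ‖g y‖ := by ring

lemma exists_lipschitzWith_convolution {U U' : Type*} [NormedAddCommGroup U] [NormedSpace ℝ U]
    [NormedAddCommGroup U'] [NormedSpace ℝ U'] (B : U →L[ℝ] ℝ →L[ℝ] U')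
    {g : E → U} (hg : ContDiff ℝ 1 g) (hgc : HasCompactSupport g) (hF : Measurable F)
    (hC : ∀ x, ‖F x‖ ≤ C) : ∃ L, LipschitzWith L (g ⋆[B, volume] F) := by
  have hderiv := hgc.hasFDerivAt_convolution_left B hg (locallyIntegrable_of_norm_le hF hC)
  have hint : Integrable (fderiv ℝ g) :=
    (hg.continuous_fderiv one_ne_zero).integrable_of_hasCompactSupport (hgc.fderiv ℝ)
  obtain ⟨L, hL⟩ : ∃ L, ∀ x, ‖(fderiv ℝ g ⋆[B.precompL E, volume] F) x‖ ≤ L :=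
    ⟨_, norm_convolution_le (B.precompL E) hint hC⟩
  refine ⟨L.toNNReal, lipschitzWith_of_nnnorm_fderiv_le (fun x => (hderiv x).differentiableAt)
    fun x => ?_⟩
  rw [(hderiv x).fderiv]
  exact NNReal.coe_le_coe.1 ((hL x).trans (le_coe_toNNReal _))

lemma convolution_mem_Icc {ψ : E → ℝ} (hψ : Continuous ψ) (hψc : HasCompactSupport ψ)
    (hψ0 : ∀ x, 0 ≤ ψ x) (hψ1 : ∫ x, ψ x = 1) (hF : Measurable F) (hbd : ∀ x, F x ∈ Icc c C)
    (x : E) : (ψ ⋆[lsmul ℝ ℝ, volume] F) x ∈ Icc c C := by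
  have hC y : ‖F y‖ ≤ max |c| |C| := abs_le_max_abs_abs (hbd y).1 (hbd y).2
  have hψi : Integrable ψ := hψ.integrable_of_hasCompactSupport hψc
  have hprod : Integrable fun t => ψ t * F (x - t) :=
    hψc.convolutionExists_left (lsmul ℝ ℝ) hψ (locallyIntegrable_of_norm_le hF hC) x
  have hconst (r : ℝ) : ∫ t, ψ t * r = r := by rw [integral_mul_const, hψ1, one_mul]
  rw [convolution_def]
  constructor
  · rw [← hconst c]
    exact integral_mono (hψi.mul_const c) hprod fun t =>
      mul_le_mul_of_nonneg_left (hbd _).1 (hψ0 t)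
  · rw [← hconst C]
    exact integral_mono hprod (hψi.mul_const C) fun t =>
      mul_le_mul_of_nonneg_left (hbd _).2 (hψ0 t)

lemma exists_isC11With_convolution {ψ : E → ℝ} (hψ : ContDiff ℝ 2 ψ) (hψc : HasCompactSupport ψ)
    (hψ0 : ∀ x, 0 ≤ ψ x) (hψ1 : ∫ x, ψ x = 1) (hF : Measurable F) (hbd : ∀ x, F x ∈ Icc c C) :
    ∃ L, IsC11With (Icc c C) univ L (ψ ⋆[lsmul ℝ ℝ, volume] F) := by
  have hC x : ‖F x‖ ≤ max |c| |C| := abs_le_max_abs_abs (hbd x).1 (hbd x).2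
  have hderiv := hψc.hasFDerivAt_convolution_left (lsmul ℝ ℝ) (hψ.of_le (by norm_num))
    (locallyIntegrable_of_norm_le hF hC)
  obtain ⟨L₁, hL₁⟩ :=
    exists_lipschitzWith_convolution (lsmul ℝ ℝ) (hψ.of_le (by norm_num)) hψc hF hC
  obtain ⟨L₂, hL₂⟩ := exists_lipschitzWith_convolution ((lsmul ℝ ℝ).precompL E)
    (hψ.fderiv_right (m := 1) (by norm_num)) (hψc.fderiv ℝ) hF hC
  exact ⟨max L₁ L₂,
    { mem := convolution_mem_Icc hψ.continuous hψc hψ0 hψ1 hF hbd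
      differentiable := fun x => (hderiv x).differentiableAt
      fderiv_mem := fun _ => mem_univ _
      lipschitz := hL₁.weaken (le_max_left _ _)
      lipschitz_fderiv := by
        rw [funext fun x => (hderiv x).fderiv]
        exact hL₂.weaken (le_max_right _ _) }⟩

lemma exists_isC11With_tendsto (hF : Measurable F) (hbd : ∀ x, F x ∈ Icc c C) :
    ∃ (Fₖ : ℕ → E → ℝ) (L : ℕ → ℝ≥0), (∀ k, IsC11With (Icc c C) univ (L k) (Fₖ k)) ∧
      ∀ᵐ x, Tendsto (fun k => Fₖ k x) atTop (𝓝 (F x)) := by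
  let φ (k : ℕ) : ContDiffBump (0 : E) :=
    { rIn := 1 / ((k : ℝ) + 1)
      rOut := 2 * (1 / ((k : ℝ) + 1))
      rIn_pos := by positivity
      rIn_lt_rOut := lt_two_mul_self (by positivity) }
  choose L hL using fun k => exists_isC11With_convolution ((φ k).contDiff_normed (n := 2))
    (φ k).hasCompactSupport_normed (φ k).nonneg_normed (φ k).integral_normed hF hbd
  refine ⟨_, L, hL, ContDiffBump.ae_convolution_tendsto_right_of_locallyIntegrable (K := 2)
    ?_ (.of_forall fun k => le_rfl) (locallyIntegrable_of_norm_le hF (C := max |c| |C|)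
      fun x => abs_le_max_abs_abs (hbd x).1 (hbd x).2)⟩
  simpa only [φ, mul_zero] using tendsto_one_div_add_atTop_nhds_zero_nat.const_mul (2 : ℝ)

end Mollification

/-! ### Correlated Gaussian pairs -/

section CorrelatedPair

namespace IsC11With

variable {W₁ W₂ V₁ V₂ : Type*} [NormedAddCommGroup W₁] [NormedSpace ℝ W₁] [NormedAddCommGroup W₂]
  [NormedSpace ℝ W₂] [NormedAddCommGroup V₁] [NormedSpace ℝ V₁] [NormedAddCommGroup V₂]
  [NormedSpace ℝ V₂] {S₁ : Set V₁} {S₂ : Set V₂} {L₁ L₂ : ℝ≥0} {F : W₁ → V₁} {G : W₂ → V₂}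

lemma prodMap (hF : IsC11With S₁ univ L₁ F) (hG : IsC11With S₂ univ L₂ G) :
    ∃ L, IsC11With (S₁ ×ˢ S₂) (range (ContinuousLinearMap.prodMapL ℝ W₁ V₁ W₂ V₂)) L
      (Prod.map F G) := by
  have hderiv (p : W₁ × W₂) : HasFDerivAt (Prod.map F G)
      (ContinuousLinearMap.prodMapL ℝ W₁ V₁ W₂ V₂ (fderiv ℝ F p.1, fderiv ℝ G p.2)) p :=
    (hF.differentiable p.1).hasFDerivAt.prodMap p (hG.differentiable p.2).hasFDerivAt
  have hlip := (hF.lipschitz.comp LipschitzWith.prod_fst).prodMk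
    (hG.lipschitz.comp LipschitzWith.prod_snd)
  have hlip' := (ContinuousLinearMap.prodMapL ℝ W₁ V₁ W₂ V₂).lipschitz.comp
    ((hF.lipschitz_fderiv.comp LipschitzWith.prod_fst).prodMk
      (hG.lipschitz_fderiv.comp LipschitzWith.prod_snd))
  exact ⟨_,
    { mem := fun p => ⟨hF.mem p.1, hG.mem p.2⟩
      differentiable := fun p => (hderiv p).differentiableAt
      fderiv_mem := fun p => ⟨_, (hderiv p).fderiv.symm⟩
      lipschitz := hlip.weaken (le_max_left _ _)
      lipschitz_fderiv := by
        rw [funext fun p => (hderiv p).fderiv]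
        exact hlip'.weaken (le_max_right _ _) }⟩

end IsC11With

/-- The law of a pair of `μ`-distributed vectors with correlation `s`, realized as
`(s X + √(1 - s²) Y, X)` with `X`, `Y` independent. -/
noncomputable def correlatedPair {E : Type*} [NormedAddCommGroup E] [NormedSpace ℝ E]
    [MeasurableSpace E] (μ : Measure E) (s : ℝ) : Measure (E × E) :=
  (μ.prod μ).map fun p => (s • p.1 + √(1 - s ^ 2) • p.2, p.1)

variable {E : Type*} [NormedAddCommGroup E] [NormedSpace ℝ E] [MeasurableSpace E]
  {μ : Measure E} {s : ℝ}

lemma correlatedPair_eq_map_clm : correlatedPair μ s = (μ.prod μ).map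
    ((s • ContinuousLinearMap.fst ℝ E E + √(1 - s ^ 2) • ContinuousLinearMap.snd ℝ E E).prod
      (ContinuousLinearMap.fst ℝ E E)) := rfl

variable [BorelSpace E]

lemma integrable_dual_mul_dual [IsGaussian μ] (d₁ d₂ : StrongDual ℝ E) :
    Integrable (fun z => d₁ z * d₂ z) μ :=
  (IsGaussian.memLp_dual μ d₁ 2 (by norm_num)).integrable_mul
    (IsGaussian.memLp_dual μ d₂ 2 (by norm_num))

lemma integral_quadratic_dual [IsGaussian μ] (d₁ d₂ : StrongDual ℝ E) (a b c : ℝ) :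
    ∫ z, (a * (d₁ z * d₁ z) + b * (d₁ z * d₂ z) + c * (d₂ z * d₂ z)) ∂μ =
      a * ∫ z, d₁ z * d₁ z ∂μ + b * ∫ z, d₁ z * d₂ z ∂μ + c * ∫ z, d₂ z * d₂ z ∂μ := by
  have h₁₁ := (integrable_dual_mul_dual (μ := μ) d₁ d₁).const_mul a
  have h₁₂ := (integrable_dual_mul_dual (μ := μ) d₁ d₂).const_mul b
  have h₂₂ := (integrable_dual_mul_dual (μ := μ) d₂ d₂).const_mul c
  have hadd : Integrable (fun z => a * (d₁ z * d₁ z) + b * (d₁ z * d₂ z)) μ := h₁₁.add h₁₂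
  rw [integral_add hadd h₂₂, integral_add h₁₁ h₁₂, integral_const_mul, integral_const_mul,
    integral_const_mul]

variable [SecondCountableTopology E]

lemma measurable_correlation :
    Measurable fun p : E × E => (s • p.1 + √(1 - s ^ 2) • p.2, p.1) := by
  fun_prop

lemma map_snd_correlatedPair [IsProbabilityMeasure μ] : (correlatedPair μ s).map Prod.snd = μ := by
  rw [correlatedPair, Measure.map_map measurable_snd measurable_correlation]
  exact measurePreserving_fst.map_eq

lemma integral_comp_snd_correlatedPair {U : Type*} [NormedAddCommGroup U] [NormedSpace ℝ U]
    [IsProbabilityMeasure μ] (G : E → U) (hG : AEStronglyMeasurable G μ) :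
    ∫ p, G p.2 ∂correlatedPair μ s = ∫ z, G z ∂μ := by
  have h := map_snd_correlatedPair (μ := μ) (s := s)
  rw [← h] at hG
  rw [← integral_map measurable_snd.aemeasurable hG, h]

lemma lintegral_correlatedPair [SFinite μ] {h : E × E → ℝ≥0∞} (hh : Measurable h) :
    ∫⁻ p, h p ∂correlatedPair μ s = ∫⁻ x, ∫⁻ y, h (s • x + √(1 - s ^ 2) • y, x) ∂μ ∂μ := by
  rw [correlatedPair, lintegral_map hh measurable_correlation]
  exact lintegral_prod _ (hh.comp measurable_correlation).aemeasurable

variable [IsGaussian μ] [CompleteSpace E]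

instance : IsGaussian (correlatedPair μ s) := by
  rw [correlatedPair_eq_map_clm]
  infer_instance

lemma map_fst_correlatedPair (hμ : ∫ z, z ∂μ = 0) (hs : s ^ 2 ≤ 1) :
    (correlatedPair μ s).map Prod.fst = μ := by
  have hsq : s ^ 2 + √(1 - s ^ 2) ^ 2 = 1 ^ 2 := by rw [sq_sqrt (by linarith)]; ring
  rw [correlatedPair, Measure.map_map measurable_fst measurable_correlation]
  exact (map_smul_add_smul_prod_self hμ hsq).trans (by simp)

lemma integral_comp_fst_correlatedPair {U : Type*} [NormedAddCommGroup U] [NormedSpace ℝ U]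
    (hμ : ∫ z, z ∂μ = 0) (hs : s ^ 2 ≤ 1) (F : E → U) (hF : AEStronglyMeasurable F μ) :
    ∫ p, F p.1 ∂correlatedPair μ s = ∫ z, F z ∂μ := by
  have h := map_fst_correlatedPair hμ hs
  rw [← h] at hF
  rw [← integral_map measurable_fst.aemeasurable hF, h]

lemma integral_id_correlatedPair (hμ : ∫ z, z ∂μ = 0) (hs : s ^ 2 ≤ 1) :
    ∫ p, p ∂correlatedPair μ s = 0 := by
  have hint : Integrable (fun p => p) (correlatedPair μ s) := IsGaussian.integrable_fun_id
  refine Prod.ext ?_ ?_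
  · rw [fst_integral hint]
    exact (integral_comp_fst_correlatedPair hμ hs id (by fun_prop)).trans hμ
  · rw [snd_integral hint]
    exact (integral_comp_snd_correlatedPair id (by fun_prop)).trans hμ

lemma integral_dual_mul_dual_correlatedPair (hμ : ∫ z, z ∂μ = 0) (d₁ d₂ : StrongDual ℝ E) :
    ∫ p, d₁ p.1 * d₂ p.2 ∂correlatedPair μ s = s * ∫ z, d₁ z * d₂ z ∂μ := by
  have hd₁ : ∫ z, d₁ z ∂μ = 0 := by
    rw [d₁.integral_comp_comm IsGaussian.integrable_fun_id, hμ, map_zero]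
  have hx : Integrable (fun p : E × E => s * (d₁ p.1 * d₂ p.1)) (μ.prod μ) :=
    ((integrable_dual_mul_dual d₁ d₂).comp_fst μ).const_mul s
  have hxy : Integrable (fun p : E × E => √(1 - s ^ 2) * (d₂ p.1 * d₁ p.2)) (μ.prod μ) :=
    ((IsGaussian.integrable_dual μ d₂).mul_prod (IsGaussian.integrable_dual μ d₁)).const_mul _
  rw [correlatedPair, integral_map measurable_correlation.aemeasurable (by fun_prop)]
  calc ∫ p : E × E, d₁ (s • p.1 + √(1 - s ^ 2) • p.2) * d₂ p.1 ∂μ.prod μ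
      = ∫ p : E × E, (s * (d₁ p.1 * d₂ p.1) + √(1 - s ^ 2) * (d₂ p.1 * d₁ p.2)) ∂μ.prod μ := by
        refine integral_congr_ae (.of_forall fun p => ?_)
        simp only [map_add, map_smul, smul_eq_mul]
        ring
    _ = s * ∫ z, d₁ z * d₂ z ∂μ := by
        rw [integral_add hx hxy, integral_const_mul, integral_const_mul, integral_prod_mul, hd₁,
          mul_zero, mul_zero, add_zero, integral_fun_fst fun z => d₁ z * d₂ z, probReal_univ,
          one_smul]

lemma integral_quadratic_correlatedPair_nonpos (hμ : ∫ z, z ∂μ = 0) (hs : s ^ 2 ≤ 1)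
    {B : ℝ × ℝ →L[ℝ] ℝ × ℝ →L[ℝ] ℝ} (hsymm : B (0, 1) (1, 0) = B (1, 0) (0, 1))
    (hB : ∀ a b : ℝ, a ^ 2 * B (1, 0) (1, 0) + 2 * s * (a * b) * B (1, 0) (0, 1) +
      b ^ 2 * B (0, 1) (0, 1) ≤ 0) (d₁ d₂ : StrongDual ℝ E) :
    ∫ p, B (d₁ p.1, d₂ p.2) (d₁ p.1, d₂ p.2) ∂correlatedPair μ s ≤ 0 := by
  let ℓ₁ := d₁.comp (ContinuousLinearMap.fst ℝ E E)
  let ℓ₂ := d₂.comp (ContinuousLinearMap.snd ℝ E E)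
  have h₁ : ∫ p, ℓ₁ p * ℓ₁ p ∂correlatedPair μ s = ∫ z, d₁ z * d₁ z ∂μ :=
    integral_comp_fst_correlatedPair hμ hs (fun z => d₁ z * d₁ z) (by fun_prop)
  have h₂ : ∫ p, ℓ₂ p * ℓ₂ p ∂correlatedPair μ s = ∫ z, d₂ z * d₂ z ∂μ :=
    integral_comp_snd_correlatedPair (fun z => d₂ z * d₂ z) (by fun_prop)
  have h₁₂ : ∫ p, ℓ₁ p * ℓ₂ p ∂correlatedPair μ s = s * ∫ z, d₁ z * d₂ z ∂μ :=
    integral_dual_mul_dual_correlatedPair hμ d₁ d₂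
  calc ∫ p, B (d₁ p.1, d₂ p.2) (d₁ p.1, d₂ p.2) ∂correlatedPair μ s
      = ∫ p, (B (1, 0) (1, 0) * (ℓ₁ p * ℓ₁ p) + 2 * B (1, 0) (0, 1) * (ℓ₁ p * ℓ₂ p) +
          B (0, 1) (0, 1) * (ℓ₂ p * ℓ₂ p)) ∂correlatedPair μ s := by
        refine integral_congr_ae (.of_forall fun p => ?_)
        have hp : (d₁ p.1, d₂ p.2) = d₁ p.1 • ((1 : ℝ), (0 : ℝ)) + d₂ p.2 • ((0 : ℝ), (1 : ℝ)) := by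
          simp
        simp only [hp, map_add, map_smul, add_apply,
          smul_apply, smul_eq_mul, hsymm, ℓ₁, ℓ₂, ContinuousLinearMap.comp_apply,
          ContinuousLinearMap.coe_fst', ContinuousLinearMap.coe_snd']
        ring
    _ = ∫ z, (B (1, 0) (1, 0) * (d₁ z * d₁ z) + 2 * B (1, 0) (0, 1) * s * (d₁ z * d₂ z) +
          B (0, 1) (0, 1) * (d₂ z * d₂ z)) ∂μ := by
        rw [integral_quadratic_dual, integral_quadratic_dual, h₁, h₁₂, h₂, mul_assoc _ s]
    _ ≤ 0 := integral_nonpos fun z => by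
        simp only [Pi.zero_apply]
        linarith [hB (d₁ z) (d₂ z)]

end CorrelatedPair

section CorrelatedJensen

/-- Ledoux's `ρ`-concavity: the Hessian of `J` becomes negative semidefinite after its off-diagonal
entry is multiplied by `s`. The smoothness needed for Taylor expansion is part of the notion. -/
structure CorrelationConcaveOn (s : ℝ) (J : ℝ × ℝ → ℝ) (S : Set (ℝ × ℝ)) : Prop where
  contDiffAt : ∀ u ∈ S, ContDiffAt ℝ 3 J u
  hessian_nonpos : ∀ u ∈ S, ∀ a b : ℝ,
    a ^ 2 * fderiv ℝ (fderiv ℝ J) u (1, 0) (1, 0) +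
      2 * s * (a * b) * fderiv ℝ (fderiv ℝ J) u (1, 0) (0, 1) +
      b ^ 2 * fderiv ℝ (fderiv ℝ J) u (0, 1) (0, 1) ≤ 0

variable {E : Type*} [NormedAddCommGroup E] [InnerProductSpace ℝ E] [FiniteDimensional ℝ E]
  [MeasurableSpace E] [BorelSpace E] {μ : Measure E} [IsGaussian μ] {s c C : ℝ}
  {J : ℝ × ℝ → ℝ} {F G : E → ℝ}

lemma integral_comp_correlatedPair_le_of_isC11With {L₁ L₂ : ℝ≥0} (hμ : ∫ z, z ∂μ = 0)
    (hs : s ^ 2 ≤ 1) (hJ : CorrelationConcaveOn s J (Icc c C ×ˢ Icc c C))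
    (hF : IsC11With (Icc c C) univ L₁ F) (hG : IsC11With (Icc c C) univ L₂ G) :
    ∫ p, J (F p.1, G p.2) ∂correlatedPair μ s ≤ J (∫ z, F z ∂μ, ∫ z, G z ∂μ) := by
  obtain ⟨L, hFG⟩ := hF.prodMap hG
  have hFc := hF.differentiable.continuous
  have hGc := hG.differentiable.continuous
  have hF₁ : Integrable (fun p => F p.1) (correlatedPair μ s) :=
    .of_mem_Icc c C (by fun_prop) (.of_forall fun p => hF.mem p.1)
  have hG₂ : Integrable (fun p => G p.2) (correlatedPair μ s) :=
    .of_mem_Icc c C (by fun_prop) (.of_forall fun p => hG.mem p.2)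
  have hmean : ∫ p, Prod.map F G p ∂correlatedPair μ s = (∫ z, F z ∂μ, ∫ z, G z ∂μ) := by
    rw [← integral_comp_fst_correlatedPair hμ hs F hFc.aestronglyMeasurable,
      ← integral_comp_snd_correlatedPair G hGc.aestronglyMeasurable]
    exact integral_pair hF₁ hG₂
  rw [← hmean]
  refine integral_comp_le_of_isC11With (integral_id_correlatedPair hμ hs)
    (isCompact_Icc.prod isCompact_Icc) ((convex_Icc c C).prod (convex_Icc c C))
    (ContinuousLinearMap.prodMapL ℝ E ℝ E ℝ).range.closed_of_finiteDimensional
    (ContinuousLinearMap.prodMapL ℝ E ℝ E ℝ).range.convex hJ.contDiffAt ?_ hFG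
  rintro u hu _ ⟨⟨d₁, d₂⟩, rfl⟩
  have hsymm := (hJ.contDiffAt u hu).isSymmSndFDerivAt (by simp; norm_num)
  exact integral_quadratic_correlatedPair_nonpos hμ hs (hsymm _ _) (hJ.hessian_nonpos u hu)
    d₁ d₂

lemma tendsto_integral_of_isC11With {Fₖ : ℕ → E → ℝ} {L : ℕ → ℝ≥0} (hac : μ ≪ volume)
    (hFₖ : ∀ k, IsC11With (Icc c C) univ (L k) (Fₖ k))
    (hlim : ∀ᵐ x, Tendsto (fun k => Fₖ k x) atTop (𝓝 (F x))) :
    Tendsto (fun k => ∫ z, Fₖ k z ∂μ) atTop (𝓝 (∫ z, F z ∂μ)) :=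
  tendsto_integral_of_dominated_convergence (fun _ => max |c| |C|)
    (fun k => (hFₖ k).differentiable.continuous.aestronglyMeasurable) (integrable_const _)
    (fun k => .of_forall fun x => abs_le_max_abs_abs ((hFₖ k).mem x).1 ((hFₖ k).mem x).2)
    (hac.ae_le hlim)

theorem integral_comp_correlatedPair_le (hμ : ∫ z, z ∂μ = 0) (hac : μ ≪ volume) (hs : s ^ 2 ≤ 1)
    (hJ : CorrelationConcaveOn s J (Icc c C ×ˢ Icc c C))
    (hF : Measurable F) (hG : Measurable G) (hFb : ∀ x, F x ∈ Icc c C)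
    (hGb : ∀ x, G x ∈ Icc c C) :
    ∫ p, J (F p.1, G p.2) ∂correlatedPair μ s ≤ J (∫ z, F z ∂μ, ∫ z, G z ∂μ) := by
  obtain ⟨Fₖ, L₁, hFₖ, hFlim⟩ := exists_isC11With_tendsto hF hFb
  obtain ⟨Gₖ, L₂, hGₖ, hGlim⟩ := exists_isC11With_tendsto hG hGb
  have hJS : ContinuousOn J (Icc c C ×ˢ Icc c C) :=
    fun u hu => (hJ.contDiffAt u hu).continuousAt.continuousWithinAt
  obtain ⟨B, hB⟩ := (isCompact_Icc.prod isCompact_Icc).exists_bound_of_continuousOn hJS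
  have hmem {Φ : E → ℝ} (hΦ : Measurable Φ) (hΦb : ∀ x, Φ x ∈ Icc c C) :
      ∫ z, Φ z ∂μ ∈ Icc c C :=
    (convex_Icc c C).integral_mem isClosed_Icc (.of_forall hΦb)
      (.of_mem_Icc c C hΦ.aemeasurable (.of_forall hΦb))
  have hright : Tendsto (fun k => J (∫ z, Fₖ k z ∂μ, ∫ z, Gₖ k z ∂μ)) atTop
      (𝓝 (J (∫ z, F z ∂μ, ∫ z, G z ∂μ))) :=
    (hJ.contDiffAt _ ⟨hmem hF hFb, hmem hG hGb⟩).continuousAt.tendsto.comp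
      ((tendsto_integral_of_isC11With hac hFₖ hFlim).prodMk_nhds
        (tendsto_integral_of_isC11With hac hGₖ hGlim))
  have hleft : Tendsto (fun k => ∫ p, J (Fₖ k p.1, Gₖ k p.2) ∂correlatedPair μ s) atTop
      (𝓝 (∫ p, J (F p.1, G p.2) ∂correlatedPair μ s)) := by
    refine tendsto_integral_of_dominated_convergence (fun _ => B) (fun k => ?_)
      (integrable_const _) (fun k => .of_forall fun p => hB _ ⟨(hFₖ k).mem _, (hGₖ k).mem _⟩) ?_
    · exact (hJS.comp_continuous (((hFₖ k).differentiable.continuous.comp continuous_fst).prodMk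
        ((hGₖ k).differentiable.continuous.comp continuous_snd))
        fun p => ⟨(hFₖ k).mem _, (hGₖ k).mem _⟩).aestronglyMeasurable
    · have h₁ := ae_of_ae_map measurable_fst.aemeasurable
        ((map_fst_correlatedPair hμ hs).symm ▸ hac.ae_le hFlim)
      have h₂ := ae_of_ae_map measurable_snd.aemeasurable
        ((map_snd_correlatedPair (μ := μ) (s := s)).symm ▸ hac.ae_le hGlim)
      filter_upwards [h₁, h₂] with p hp₁ hp₂
      exact (hJ.contDiffAt _ ⟨hFb _, hGb _⟩).continuousAt.tendsto.comp (hp₁.prodMk_nhds hp₂)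
  exact le_of_tendsto_of_tendsto' hleft hright fun k =>
    integral_comp_correlatedPair_le_of_isC11With hμ hs hJ (hFₖ k) (hGₖ k)

end CorrelatedJensen

/-! ### Two-function hypercontractivity -/

section PowerProduct

variable {α β s c C : ℝ} {u : ℝ × ℝ}

lemma hasFDerivAt_rpow_mul_rpow (α β : ℝ) (h₁ : 0 < u.1) (h₂ : 0 < u.2) :
    HasFDerivAt (fun v : ℝ × ℝ => v.1 ^ α * v.2 ^ β)
      ((α * (u.1 ^ (α - 1) * u.2 ^ β)) • ContinuousLinearMap.fst ℝ ℝ ℝ +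
        (β * (u.1 ^ α * u.2 ^ (β - 1))) • ContinuousLinearMap.snd ℝ ℝ ℝ) u := by
  refine ((hasFDerivAt_fst.rpow_const (Or.inl h₁.ne')).mul
    (hasFDerivAt_snd.rpow_const (Or.inl h₂.ne'))).congr_fderiv ?_
  rw [add_comm, smul_smul, smul_smul]
  congr 2 <;> ring

lemma fderiv_fderiv_rpow_mul_rpow (α β : ℝ) (h₁ : 0 < u.1) (h₂ : 0 < u.2) (v w : ℝ × ℝ) :
    fderiv ℝ (fderiv ℝ fun u : ℝ × ℝ => u.1 ^ α * u.2 ^ β) u v w =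
      u.1 ^ α * u.2 ^ β * (α * (α - 1) * (v.1 / u.1 * (w.1 / u.1)) +
        α * β * (v.1 / u.1 * (w.2 / u.2) + v.2 / u.2 * (w.1 / u.1)) +
        β * (β - 1) * (v.2 / u.2 * (w.2 / u.2))) := by
  have hpos : ∀ᶠ y : ℝ × ℝ in 𝓝 u, 0 < y.1 ∧ 0 < y.2 :=
    (continuousAt_fst.eventually (lt_mem_nhds h₁)).and
      (continuousAt_snd.eventually (lt_mem_nhds h₂))
  have hderiv : fderiv ℝ (fun u : ℝ × ℝ => u.1 ^ α * u.2 ^ β) =ᶠ[𝓝 u] fun y =>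
      (α * (y.1 ^ (α - 1) * y.2 ^ β)) • ContinuousLinearMap.fst ℝ ℝ ℝ +
        (β * (y.1 ^ α * y.2 ^ (β - 1))) • ContinuousLinearMap.snd ℝ ℝ ℝ :=
    hpos.mono fun y hy => (hasFDerivAt_rpow_mul_rpow α β hy.1 hy.2).fderiv
  have hderiv₂ :=
    (((hasFDerivAt_rpow_mul_rpow (α - 1) β h₁ h₂).const_mul α).smul_const
      (ContinuousLinearMap.fst ℝ ℝ ℝ)).fun_add
    (((hasFDerivAt_rpow_mul_rpow α (β - 1) h₁ h₂).const_mul β).smul_const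
      (ContinuousLinearMap.snd ℝ ℝ ℝ))
  rw [hderiv.fderiv_eq, hderiv₂.fderiv]
  simp only [add_apply, smul_apply, ContinuousLinearMap.smulRight_apply,
    ContinuousLinearMap.coe_fst', ContinuousLinearMap.coe_snd', smul_eq_mul,
    rpow_sub_one h₁.ne', rpow_sub_one h₂.ne']
  ring

lemma quadratic_nonpos_of_correlation (hα : 0 < α) (hα1 : α < 1) (hβ : 0 ≤ β)
    (hs : s ^ 2 * (α * β) ≤ (1 - α) * (1 - β)) (x y : ℝ) :
    α * (α - 1) * x ^ 2 + 2 * s * (α * β) * (x * y) + β * (β - 1) * y ^ 2 ≤ 0 := by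
  have hpos : 0 < α * (1 - α) := mul_pos hα (by linarith)
  have hcompl : α * (1 - α) *
      (α * (α - 1) * x ^ 2 + 2 * s * (α * β) * (x * y) + β * (β - 1) * y ^ 2) =
      -((α * (1 - α) * x - s * (α * β) * y) ^ 2 +
        α * β * ((1 - α) * (1 - β) - s ^ 2 * (α * β)) * y ^ 2) := by ring
  refine nonpos_of_mul_nonpos_right (hcompl.trans_le ?_) hpos
  have : 0 ≤ (1 - α) * (1 - β) - s ^ 2 * (α * β) := by linarith
  exact neg_nonpos.2 (by positivity)

lemma correlationConcaveOn_rpow_mul_rpow (hc : 0 < c) (hα : 0 < α) (hα1 : α < 1) (hβ : 0 ≤ β)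
    (hs : s ^ 2 * (α * β) ≤ (1 - α) * (1 - β)) :
    CorrelationConcaveOn s (fun u => u.1 ^ α * u.2 ^ β) (Icc c C ×ˢ Icc c C) where
  contDiffAt u hu := by
    have h₁ : 0 < u.1 := hc.trans_le hu.1.1
    have h₂ : 0 < u.2 := hc.trans_le hu.2.1
    exact (contDiffAt_fst.rpow_const_of_ne h₁.ne').mul (contDiffAt_snd.rpow_const_of_ne h₂.ne')
  hessian_nonpos u hu a b := by
    have h₁ : 0 < u.1 := hc.trans_le hu.1.1
    have h₂ : 0 < u.2 := hc.trans_le hu.2.1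
    have hq := quadratic_nonpos_of_correlation hα hα1 hβ hs (a / u.1) (b / u.2)
    have hw : 0 ≤ u.1 ^ α * u.2 ^ β := by positivity
    simp only [fderiv_fderiv_rpow_mul_rpow α β h₁ h₂]
    refine (mul_nonpos_of_nonneg_of_nonpos hw hq).trans_eq' ?_
    ring

end PowerProduct

section TwoFunction

lemma iSup_min_natCast_rpow {α : ℝ} (a : ℝ≥0∞) (hα : 0 ≤ α) :
    ⨆ k : ℕ, min a k ^ α = a ^ α := by
  refine iSup_eq_of_tendsto (fun i j hij => by gcongr) ?_
  have h : Tendsto (fun k : ℕ => min a k) atTop (𝓝 a) := by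
    simpa using tendsto_const_nhds.min ENNReal.tendsto_nat_nhds_top
  exact (ENNReal.continuous_rpow_const.tendsto a).comp h

variable {E : Type*} [NormedAddCommGroup E] [InnerProductSpace ℝ E] [FiniteDimensional ℝ E]
  [MeasurableSpace E] [BorelSpace E] {μ : Measure E} [IsGaussian μ] {s α β : ℝ}

lemma integral_rpow_mul_rpow_correlatedPair_le (hμ : ∫ z, z ∂μ = 0) (hac : μ ≪ volume)
    (hs : s ^ 2 ≤ 1) (hα : 0 < α) (hα1 : α < 1) (hβ : 0 ≤ β)
    (hαβ : s ^ 2 * (α * β) ≤ (1 - α) * (1 - β))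
    {c C : ℝ} (hc : 0 < c) {f g : E → ℝ}
    (hf : Measurable f) (hg : Measurable g) (hfb : ∀ x, f x ∈ Icc c C) (hgb : ∀ x, g x ∈ Icc c C) :
    ∫ p, f p.1 ^ α * g p.2 ^ β ∂correlatedPair μ s ≤ (∫ z, f z ∂μ) ^ α * (∫ z, g z ∂μ) ^ β :=
  integral_comp_correlatedPair_le hμ hac hs
    (correlationConcaveOn_rpow_mul_rpow hc hα hα1 hβ hαβ) hf hg hfb hgb

lemma lintegral_rpow_mul_rpow_correlatedPair_le_of_mem_Icc (hμ : ∫ z, z ∂μ = 0) (hac : μ ≪ volume)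
    (hs : s ^ 2 ≤ 1) (hα : 0 < α) (hα1 : α < 1) (hβ : 0 ≤ β)
    (hαβ : s ^ 2 * (α * β) ≤ (1 - α) * (1 - β))
    {c C : ℝ≥0} (hc : 0 < c) {f g : E → ℝ≥0}
    (hf : Measurable f) (hg : Measurable g) (hfb : ∀ x, f x ∈ Icc c C) (hgb : ∀ x, g x ∈ Icc c C) :
    ∫⁻ p, (f p.1 : ℝ≥0∞) ^ α * (g p.2 : ℝ≥0∞) ^ β ∂correlatedPair μ s ≤
      (∫⁻ z, f z ∂μ) ^ α * (∫⁻ z, g z ∂μ) ^ β := by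
  have hreal {h : E → ℝ≥0} (hh : Measurable h) (hhb : ∀ x, h x ∈ Icc c C) :
      ∫⁻ z, h z ∂μ = ENNReal.ofReal (∫ z, (h z : ℝ) ∂μ) :=
    lintegral_coe_eq_integral h (.of_mem_Icc c C hh.coe_nnreal_real.aemeasurable (.of_forall hhb))
  have hint : Integrable (fun p => ((f p.1 ^ α * g p.2 ^ β : ℝ≥0) : ℝ)) (correlatedPair μ s) := by
    refine .of_bound (Measurable.coe_nnreal_real (by fun_prop)).aestronglyMeasurable
      (C ^ α * C ^ β : ℝ≥0) (.of_forall fun p => ?_)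
    rw [NNReal.norm_eq, NNReal.coe_le_coe]
    exact mul_le_mul' (NNReal.rpow_le_rpow (hfb _).2 hα.le) (NNReal.rpow_le_rpow (hgb _).2 hβ)
  have hleft : ∫⁻ p, (f p.1 : ℝ≥0∞) ^ α * (g p.2 : ℝ≥0∞) ^ β ∂correlatedPair μ s =
      ENNReal.ofReal (∫ p, (f p.1 : ℝ) ^ α * (g p.2 : ℝ) ^ β ∂correlatedPair μ s) := by
    simpa [ENNReal.coe_rpow_of_nonneg, hα.le, hβ] using lintegral_coe_eq_integral _ hint
  rw [hleft, hreal hf hfb, hreal hg hgb,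
    ENNReal.ofReal_rpow_of_nonneg (integral_nonneg fun z => by simp) hα.le,
    ENNReal.ofReal_rpow_of_nonneg (integral_nonneg fun z => by simp) hβ,
    ← ENNReal.ofReal_mul (by positivity)]
  exact ENNReal.ofReal_le_ofReal (integral_rpow_mul_rpow_correlatedPair_le hμ hac hs hα hα1 hβ hαβ
    hc hf.coe_nnreal_real hg.coe_nnreal_real hfb hgb)

lemma lintegral_rpow_mul_rpow_correlatedPair_le_of_le (hμ : ∫ z, z ∂μ = 0) (hac : μ ≪ volume)
    (hs : s ^ 2 ≤ 1) (hα : 0 < α) (hα1 : α < 1) (hβ : 0 ≤ β)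
    (hαβ : s ^ 2 * (α * β) ≤ (1 - α) * (1 - β))
    {C : ℝ≥0} {f g : E → ℝ≥0}
    (hf : Measurable f) (hg : Measurable g) (hfC : ∀ x, f x ≤ C) (hgC : ∀ x, g x ≤ C) :
    ∫⁻ p, (f p.1 : ℝ≥0∞) ^ α * (g p.2 : ℝ≥0∞) ^ β ∂correlatedPair μ s ≤
      (∫⁻ z, f z ∂μ) ^ α * (∫⁻ z, g z ∂μ) ^ β := by
  have hfin {h : E → ℝ≥0} (hh : ∀ x, h x ≤ C) : ∫⁻ z, h z ∂μ ≠ ∞ :=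
    ((lintegral_mono fun z => ENNReal.coe_le_coe.2 (hh z)).trans_lt (by simp)).ne
  have hlim {A : ℝ≥0∞} (γ : ℝ) : Tendsto (fun δ : ℝ≥0 => (A + δ) ^ γ) (𝓝[>] 0) (𝓝 (A ^ γ)) := by
    have : Continuous fun δ : ℝ≥0 => (A + δ) ^ γ :=
      ENNReal.continuous_rpow_const.comp (continuous_const.add ENNReal.continuous_coe)
    simpa using (this.tendsto 0).mono_left nhdsWithin_le_nhds
  refine ge_of_tendsto (ENNReal.Tendsto.mul (hlim α)
    (.inr (ENNReal.rpow_ne_top_of_nonneg hβ (hfin hgC))) (hlim β)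
    (.inr (ENNReal.rpow_ne_top_of_nonneg hα.le (hfin hfC))))
    (eventually_nhdsWithin_of_forall fun δ (hδ : 0 < δ) => ?_)
  have hadd {h : E → ℝ≥0} (hh : Measurable h) : ∫⁻ z, (h z + δ : ℝ≥0) ∂μ = ∫⁻ z, h z ∂μ + δ := by
    simp [lintegral_add_left hh.coe_nnreal_ennreal]
  rw [← hadd hf, ← hadd hg]
  refine (lintegral_mono fun p => ?_).trans
    (lintegral_rpow_mul_rpow_correlatedPair_le_of_mem_Icc hμ hac hs hα hα1 hβ hαβ hδ
      (hf.add_const δ) (hg.add_const δ) (C := C + δ)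
      (fun x => ⟨le_add_self, by gcongr; exact hfC x⟩)
      (fun x => ⟨le_add_self, by gcongr; exact hgC x⟩))
  push_cast
  gcongr <;> exact le_self_add

theorem lintegral_rpow_mul_rpow_correlatedPair_le (hμ : ∫ z, z ∂μ = 0) (hac : μ ≪ volume)
    (hs : s ^ 2 ≤ 1) (hα : 0 < α) (hα1 : α < 1) (hβ : 0 ≤ β)
    (hαβ : s ^ 2 * (α * β) ≤ (1 - α) * (1 - β))
    {F G : E → ℝ≥0∞} (hF : Measurable F) (hG : Measurable G) :
    ∫⁻ p, F p.1 ^ α * G p.2 ^ β ∂correlatedPair μ s ≤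
      (∫⁻ z, F z ∂μ) ^ α * (∫⁻ z, G z ∂μ) ^ β := by
  have hsup (p : E × E) : F p.1 ^ α * G p.2 ^ β ≤
      ⨆ k : ℕ, min (F p.1) k ^ α * min (G p.2) k ^ β := by
    rw [← iSup_min_natCast_rpow (F p.1) hα.le, ← iSup_min_natCast_rpow (G p.2) hβ,
      ENNReal.iSup_mul]
    simp only [ENNReal.mul_iSup]
    refine iSup₂_le fun i j => le_iSup_of_le (max i j) ?_
    gcongr <;> simp
  refine (lintegral_mono hsup).trans ?_
  rw [lintegral_iSup (fun k => by fun_prop) fun i j hij p => by dsimp only; gcongr]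
  refine iSup_le fun k => ?_
  have hcoe (a : ℝ≥0∞) : ((min a k).toNNReal : ℝ≥0∞) = min a k :=
    ENNReal.coe_toNNReal (ne_top_of_le_ne_top (ENNReal.natCast_ne_top k) (min_le_right _ _))
  have hle (a : ℝ≥0∞) : (min a k).toNNReal ≤ (k : ℝ≥0) :=
    ENNReal.coe_le_coe.1 (by rw [hcoe]; exact min_le_right _ _)
  have h := lintegral_rpow_mul_rpow_correlatedPair_le_of_le hμ hac hs hα hα1 hβ hαβ
    (hF.min measurable_const).ennreal_toNNReal (hG.min measurable_const).ennreal_toNNReal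
    (fun x => hle (F x)) fun x => hle (G x)
  simp only [hcoe] at h
  refine h.trans ?_
  gcongr <;> exact min_le_left _ _

end TwoFunction

/-! ### The Gaussian measure against Lebesgue measure -/

section GaussianWeight

variable {E : Type*} [NormedAddCommGroup E]

/-- The centred Gaussian `exp (-r |x|² / 2)` with precision `r`, as an extended nonnegative real.
Negative `r` is allowed: it is used to cancel Gaussian densities. -/
noncomputable def gaussianWeight (r : ℝ) (x : E) : ℝ≥0∞ :=
  ENNReal.ofReal (rexp (-(r * ‖x‖ ^ 2) / 2))

lemma gaussianWeight_neg_mul_self (r : ℝ) (x : E) :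
    gaussianWeight (-r) x * gaussianWeight r x = 1 := by
  rw [gaussianWeight, gaussianWeight, ← ENNReal.ofReal_mul (by positivity), ← Real.exp_add]
  ring_nf
  simp

lemma gaussianWeight_rpow (r : ℝ) {p : ℝ} (hp : 0 ≤ p) (x : E) :
    gaussianWeight r x ^ p = gaussianWeight (r * p) x := by
  rw [gaussianWeight, gaussianWeight, ENNReal.ofReal_rpow_of_nonneg (by positivity) hp,
    ← Real.exp_mul]
  ring_nf

lemma mul_gaussianWeight_neg_mul_self (r : ℝ) (a : ℝ≥0∞) (x : E) :
    a * gaussianWeight (-r) x * gaussianWeight r x = a := by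
  rw [mul_assoc, gaussianWeight_neg_mul_self, mul_one]

lemma mul_gaussianWeight_neg_eq_rpow {r : ℝ} (hr : 0 < r) (a : ℝ≥0∞) (x : E) :
    a * gaussianWeight (-r) x = (a ^ (1 / r) * gaussianWeight (-1) x) ^ r := by
  rw [ENNReal.mul_rpow_of_nonneg _ _ hr.le, gaussianWeight_rpow _ hr.le, ← ENNReal.rpow_mul,
    one_div_mul_cancel hr.ne', ENNReal.rpow_one, neg_one_mul]

lemma gaussianWeight_smul [NormedSpace ℝ E] (r c : ℝ) (x : E) :
    gaussianWeight r (c • x) = gaussianWeight (r * c ^ 2) x := by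
  rw [gaussianWeight, gaussianWeight, norm_smul, Real.norm_eq_abs, mul_pow, sq_abs, mul_assoc]

lemma gaussianWeight_mehler [InnerProductSpace ℝ E] {s b d k l : ℝ} (hs : s ^ 2 < 1)
    (hb : b ^ 2 + k = (1 - s ^ 2)⁻¹)
    (hd : d ^ 2 + l = (1 - s ^ 2)⁻¹)
    (hbd : b * d = s * (1 - s ^ 2)⁻¹) (v x : E) :
    gaussianWeight 1 x * gaussianWeight (1 - s ^ 2)⁻¹ (v - s • x) =
      gaussianWeight k v * gaussianWeight l x * gaussianWeight 1 (b • v - d • x) := by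
  have hcancel : (1 - s ^ 2)⁻¹ * (1 - s ^ 2) = 1 := inv_mul_cancel₀ (by linarith)
  simp only [gaussianWeight, ← ENNReal.ofReal_mul (Real.exp_pos _).le, ← Real.exp_add,
    norm_sub_sq_real, norm_smul, inner_smul_left, inner_smul_right, mul_pow, Real.norm_eq_abs,
    sq_abs, RCLike.conj_to_real]
  congr 2
  linear_combination ‖v‖ ^ 2 / 2 * hb + ‖x‖ ^ 2 / 2 * hd - ⟪v, x⟫ * hbd + ‖x‖ ^ 2 / 2 * hcancel

variable [MeasurableSpace E] [BorelSpace E]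

@[fun_prop]
lemma measurable_gaussianWeight (r : ℝ) : Measurable (gaussianWeight r : E → ℝ≥0∞) := by
  unfold gaussianWeight
  fun_prop

end GaussianWeight

section StdGaussianDensity

variable {E : Type*} [NormedAddCommGroup E] [InnerProductSpace ℝ E] [FiniteDimensional ℝ E]
  [MeasurableSpace E] [BorelSpace E]

variable (E) in
/-- Lebesgue measure, normalized so that `exp (-|x|² / 2)` is the density of the standard
Gaussian. -/
noncomputable def normalizedVolume : Measure E :=
  ENNReal.ofReal ((2 * π) ^ (-(Module.finrank ℝ E : ℝ) / 2)) • volume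

instance : (normalizedVolume E).IsAddHaarMeasure :=
  .smul _ (ENNReal.ofReal_pos.2 (by positivity)).ne' (by simp)

lemma isFiniteMeasure_withDensity_gaussianWeight :
    IsFiniteMeasure ((normalizedVolume E).withDensity (gaussianWeight 1)) := by
  refine isFiniteMeasure_withDensity_ofReal (Integrable.smul_measure ?_ (by simp)).hasFiniteIntegral
  have h := GaussianFourier.integral_rexp_neg_mul_sq_norm (V := E) (b := 1 / 2) (by norm_num)
  refine (not_imp_comm.1 integral_undef (h.trans_ne (by positivity))).congr (.of_forall fun x => ?_)
  ring_nf

lemma charFun_withDensity_gaussianWeight (t : E) :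
    charFun ((normalizedVolume E).withDensity (gaussianWeight 1)) t =
      Complex.exp (-‖t‖ ^ 2 / 2) := by
  have hdensity (x : E) : (gaussianWeight 1 x).toReal • Complex.exp (⟪x, t⟫ * Complex.I) =
      Complex.exp (-(1 / 2 : ℂ) * ‖x‖ ^ 2 + Complex.I * ⟪t, x⟫) := by
    rw [gaussianWeight, ENNReal.toReal_ofReal (by positivity), Complex.real_smul,
      Complex.ofReal_exp, ← Complex.exp_add, real_inner_comm]
    push_cast
    ring_nf
  have hconst : ((π : ℂ) / (1 / 2)) ^ (Module.finrank ℝ E / 2 : ℂ) =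
      ((2 * π) ^ ((Module.finrank ℝ E : ℝ) / 2) : ℝ) := by
    rw [Complex.ofReal_cpow (by positivity)]
    push_cast
    ring_nf
  rw [charFun_apply, integral_withDensity_eq_integral_toReal_smul (by fun_prop)
    (.of_forall fun x => by simp [gaussianWeight]), normalizedVolume, integral_smul_measure]
  simp_rw [hdensity]
  rw [GaussianFourier.integral_cexp_neg_mul_sq_norm_add (by norm_num), hconst,
    ENNReal.toReal_ofReal (by positivity), Complex.real_smul, ← mul_assoc, ← Complex.ofReal_mul,
    ← Real.rpow_add (by positivity), neg_div, neg_add_cancel, Real.rpow_zero, Complex.I_sq]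
  push_cast
  ring_nf

variable (E) in
lemma stdGaussian_eq_withDensity :
    stdGaussian E = (normalizedVolume E).withDensity (gaussianWeight 1) := by
  have := isFiniteMeasure_withDensity_gaussianWeight (E := E)
  refine Measure.ext_of_charFun (funext fun t => ?_)
  rw [charFun_withDensity_gaussianWeight, charFun_stdGaussian]

lemma stdGaussian_absolutelyContinuous : stdGaussian E ≪ volume := by
  rw [stdGaussian_eq_withDensity]
  exact (withDensity_absolutelyContinuous _ _).trans Measure.smul_absolutelyContinuous

lemma lintegral_stdGaussian {h : E → ℝ≥0∞} (hh : Measurable h) :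
    ∫⁻ x, h x ∂stdGaussian E = ∫⁻ x, gaussianWeight 1 x * h x ∂normalizedVolume E := by
  rw [stdGaussian_eq_withDensity,
    lintegral_withDensity_eq_lintegral_mul _ (measurable_gaussianWeight 1) hh]
  rfl

lemma lintegral_mul_gaussianWeight_neg_one {h : E → ℝ≥0∞} (hh : Measurable h) :
    ∫⁻ x, h x * gaussianWeight (-1) x ∂stdGaussian E = ∫⁻ x, h x ∂normalizedVolume E := by
  rw [lintegral_stdGaussian (by fun_prop)]
  refine lintegral_congr fun x => ?_
  rw [mul_left_comm, mul_comm (gaussianWeight 1 x), gaussianWeight_neg_mul_self, mul_one]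

end StdGaussianDensity

section Scaling

variable {E : Type*} [NormedAddCommGroup E] [NormedSpace ℝ E] [FiniteDimensional ℝ E]
  [MeasurableSpace E] [BorelSpace E] {μ : Measure E} [μ.IsAddHaarMeasure] {c : ℝ}

lemma lintegral_comp_smul_addHaar (hc : 0 < c) (h : E → ℝ≥0∞) :
    ∫⁻ x, h (c • x) ∂μ = ENNReal.ofReal c⁻¹ ^ Module.finrank ℝ E * ∫⁻ x, h x ∂μ := by
  have hemb : MeasurableEmbedding fun x : E => c • x :=
    (Homeomorph.smulOfNeZero c hc.ne').measurableEmbedding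
  rw [← hemb.lintegral_map, Measure.map_addHaar_smul μ hc.ne', lintegral_smul_measure,
    smul_eq_mul, abs_of_nonneg (by positivity), ← inv_pow, ENNReal.ofReal_pow (by positivity)]

lemma lintegral_eq_mul_lintegral_comp_smul (hc : 0 < c) (h : E → ℝ≥0∞) :
    ∫⁻ x, h x ∂μ = ENNReal.ofReal c ^ Module.finrank ℝ E * ∫⁻ x, h (c • x) ∂μ := by
  have hinv := lintegral_comp_smul_addHaar (μ := μ) (inv_pos.2 hc) fun x => h (c • x)
  simpa only [smul_inv_smul₀ hc.ne', inv_inv] using hinv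

lemma lintegral_comp_add_smul_addHaar (hc : 0 < c) (h : E → ℝ≥0∞) (x : E) :
    ∫⁻ y, h (x + c • y) ∂μ = ENNReal.ofReal c⁻¹ ^ Module.finrank ℝ E * ∫⁻ v, h v ∂μ := by
  rw [lintegral_comp_smul_addHaar hc fun v => h (x + v), lintegral_add_left_eq_self h x]

end Scaling

section GaussianForm

variable {E : Type*} [NormedAddCommGroup E] [InnerProductSpace ℝ E] [FiniteDimensional ℝ E]
  [MeasurableSpace E] [BorelSpace E] {s b d k l : ℝ} {f g : E → ℝ≥0∞}

/-- The bilinear form `∬ f(v) g(x) exp (-|b v - d x|² / 2)`. For `b = d` its kernel is a multiple of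
the heat kernel at time `b⁻²`. -/
noncomputable def gaussianForm (b d : ℝ) (f g : E → ℝ≥0∞) : ℝ≥0∞ :=
  ∫⁻ x, ∫⁻ v, f v * g x * gaussianWeight 1 (b • v - d • x) ∂normalizedVolume E ∂normalizedVolume E

lemma lintegral_comp_add_smul_stdGaussian {c : ℝ} (hc : 0 < c) {F : E → ℝ≥0∞} (hF : Measurable F)
    (a : E) :
    ∫⁻ y, F (a + c • y) ∂stdGaussian E = ENNReal.ofReal c⁻¹ ^ Module.finrank ℝ E *
      ∫⁻ v, gaussianWeight (c ^ 2)⁻¹ (v - a) * F v ∂normalizedVolume E := by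
  rw [lintegral_stdGaussian (by fun_prop), ← lintegral_comp_add_smul_addHaar hc _ a]
  refine lintegral_congr fun y => ?_
  rw [add_sub_cancel_left, gaussianWeight_smul, inv_mul_cancel₀ (by positivity)]

lemma lintegral_correlatedPair_stdGaussian (hs : s ^ 2 < 1)
    (hb : b ^ 2 + k = (1 - s ^ 2)⁻¹) (hd : d ^ 2 + l = (1 - s ^ 2)⁻¹)
    (hbd : b * d = s * (1 - s ^ 2)⁻¹) (hf : Measurable f) (hg : Measurable g) :
    ∫⁻ p, f p.1 * g p.2 ∂correlatedPair (stdGaussian E) s =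
      ENNReal.ofReal (√(1 - s ^ 2))⁻¹ ^ Module.finrank ℝ E *
        gaussianForm b d (fun v => f v * gaussianWeight k v)
          fun x => g x * gaussianWeight l x := by
  have hpos : 0 < 1 - s ^ 2 := by linarith
  have hinner (x : E) : ∫⁻ y, f (s • x + √(1 - s ^ 2) • y) * g x ∂stdGaussian E =
      ENNReal.ofReal (√(1 - s ^ 2))⁻¹ ^ Module.finrank ℝ E *
        ∫⁻ v, gaussianWeight (1 - s ^ 2)⁻¹ (v - s • x) * (f v * g x) ∂normalizedVolume E := by
    rw [lintegral_comp_add_smul_stdGaussian (F := fun v => f v * g x) (by positivity)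
      (by fun_prop), Real.sq_sqrt hpos.le]
  rw [lintegral_correlatedPair (by fun_prop)]
  simp_rw [hinner]
  rw [lintegral_const_mul _ (by fun_prop), lintegral_stdGaussian (by fun_prop), gaussianForm]
  congr 1
  refine lintegral_congr fun x => ?_
  rw [← lintegral_const_mul _ (by fun_prop)]
  refine lintegral_congr fun v => ?_
  rw [← mul_assoc, gaussianWeight_mehler hs hb hd hbd]
  ring

lemma gaussianForm_eq_mul_comp_smul {c e : ℝ} (hc : 0 < c) (he : 0 < e) :
    gaussianForm b d f g = ENNReal.ofReal (c * e) ^ Module.finrank ℝ E *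
      gaussianForm (b * c) (d * e) (fun v => f (c • v)) (fun x => g (e • x)) := by
  have hinner (x : E) : ∫⁻ v, f v * g x *
      gaussianWeight 1 (b • v - d • x) ∂normalizedVolume E =
        ENNReal.ofReal c ^ Module.finrank ℝ E * ∫⁻ v, f (c • v) * g x *
          gaussianWeight 1 ((b * c) • v - d • x) ∂normalizedVolume E := by
    simp only [lintegral_eq_mul_lintegral_comp_smul hc fun v => f v * g x *
      gaussianWeight 1 (b • v - d • x), mul_smul]
  simp only [gaussianForm, hinner]
  rw [lintegral_eq_mul_lintegral_comp_smul he, lintegral_const_mul' _ _ (by simp), ← mul_assoc,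
    mul_comm c, ENNReal.ofReal_mul (by positivity), mul_pow]
  simp only [mul_smul]

variable {α β : ℝ}

lemma exists_critical_correlation (hα : 0 < α) (hα1 : α < 1) (hβ : 0 < β) (hβ1 : β < 1)
    (hαβ : 1 < α + β) :
    ∃ s, s ^ 2 * (α * β) = (1 - α) * (1 - β) ∧ 1 - s ^ 2 = (α + β - 1) / (α * β) ∧
      √(α * (1 - α) / (α + β - 1)) ^ 2 + α = (1 - s ^ 2)⁻¹ ∧
      √(β * (1 - β) / (α + β - 1)) ^ 2 + β = (1 - s ^ 2)⁻¹ ∧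
      √(α * (1 - α) / (α + β - 1)) * √(β * (1 - β) / (α + β - 1)) = s * (1 - s ^ 2)⁻¹ := by
  have hα' : 0 < 1 - α := by linarith
  have hβ' : 0 < 1 - β := by linarith
  have hD : 0 < α + β - 1 := by linarith
  have hs : √((1 - α) * (1 - β) / (α * β)) ^ 2 = (1 - α) * (1 - β) / (α * β) :=
    Real.sq_sqrt (by positivity)
  have hτ : 1 - √((1 - α) * (1 - β) / (α * β)) ^ 2 = (α + β - 1) / (α * β) := by
    rw [hs]; field_simp; ring
  refine ⟨√((1 - α) * (1 - β) / (α * β)), by rw [hs]; field_simp, hτ, ?_, ?_, ?_⟩ <;> rw [hτ]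
  · rw [Real.sq_sqrt (by positivity)]; field_simp; ring
  · rw [Real.sq_sqrt (by positivity)]; field_simp; ring
  · rw [← Real.sqrt_mul (by positivity), Real.sqrt_eq_iff_mul_self_eq (by positivity)
      (by positivity), mul_mul_mul_comm, Real.mul_self_sqrt (by positivity)]
    field_simp

/-- At this ratio of `b` and `d` the form is, up to Gaussian factors absorbed by `f` and `g`, the
expectation under a correlation for which two-function hypercontractivity is just allowed. -/
lemma gaussianForm_le_of_critical (hα : 0 < α) (hα1 : α < 1) (hβ : 0 < β) (hβ1 : β < 1)
    (hαβ : 1 < α + β) (hf : Measurable f) (hg : Measurable g) :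
    gaussianForm √(α * (1 - α) / (α + β - 1)) √(β * (1 - β) / (α + β - 1)) f g ≤
      ENNReal.ofReal √((α + β - 1) / (α * β)) ^ Module.finrank ℝ E *
        ((∫⁻ v, f v ^ (1 / α) ∂normalizedVolume E) ^ α *
          (∫⁻ x, g x ^ (1 / β) ∂normalizedVolume E) ^ β) := by
  obtain ⟨s, hs, hτ, hb, hd, hbd⟩ := exists_critical_correlation hα hα1 hβ hβ1 hαβ
  have hτ_pos : 0 < 1 - s ^ 2 := by
    rw [hτ]
    exact div_pos (by linarith) (by positivity)
  have hpair := lintegral_correlatedPair_stdGaussian (by linarith) hb hd hbd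
    (f := fun v => f v * gaussianWeight (-α) v) (g := fun x => g x * gaussianWeight (-β) x)
    (by fun_prop) (by fun_prop)
  have hyper := lintegral_rpow_mul_rpow_correlatedPair_le (integral_id_stdGaussian (E := E))
    stdGaussian_absolutelyContinuous (by linarith) hα hα1 hβ.le hs.le
    (F := fun v => f v ^ (1 / α) * gaussianWeight (-1) v)
    (G := fun x => g x ^ (1 / β) * gaussianWeight (-1) x) (by fun_prop) (by fun_prop)
  rw [lintegral_mul_gaussianWeight_neg_one (by fun_prop),
    lintegral_mul_gaussianWeight_neg_one (by fun_prop)] at hyper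
  simp only [← mul_gaussianWeight_neg_eq_rpow hα, ← mul_gaussianWeight_neg_eq_rpow hβ, hpair,
    mul_gaussianWeight_neg_mul_self] at hyper
  rw [← hτ]
  calc gaussianForm _ _ f g = ENNReal.ofReal √(1 - s ^ 2) ^ Module.finrank ℝ E *
        (ENNReal.ofReal (√(1 - s ^ 2))⁻¹ ^ Module.finrank ℝ E * gaussianForm _ _ f g) := by
        rw [← mul_assoc, ← mul_pow, ← ENNReal.ofReal_mul (by positivity),
          mul_inv_cancel₀ (by positivity), ENNReal.ofReal_one, one_pow, one_mul]
    _ ≤ _ := by gcongr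

lemma ofReal_pow_mul_rpow {c : ℝ} (hc : 0 < c) (m : ℕ) (I : ℝ≥0∞) (hα : 0 ≤ α) :
    (ENNReal.ofReal c ^ m * I) ^ α = ENNReal.ofReal (c ^ α) ^ m * I ^ α := by
  rw [ENNReal.mul_rpow_of_nonneg _ _ hα, ← ENNReal.ofReal_rpow_of_pos hc, ← ENNReal.rpow_natCast,
    ← ENNReal.rpow_natCast, ← ENNReal.rpow_mul, ← ENNReal.rpow_mul, mul_comm α]

lemma lintegral_comp_smul_rpow {c : ℝ} (hc : 0 < c) (hα : 0 ≤ α) (h : E → ℝ≥0∞) :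
    (∫⁻ x, h (c • x) ∂normalizedVolume E) ^ α =
      ENNReal.ofReal (c ^ (-α)) ^ Module.finrank ℝ E * (∫⁻ x, h x ∂normalizedVolume E) ^ α := by
  rw [lintegral_comp_smul_addHaar hc h, ofReal_pow_mul_rpow (inv_pos.2 hc) _ _ hα,
    Real.inv_rpow hc.le, Real.rpow_neg hc.le]

lemma gaussianForm_le_of_forall_le {b₀ d₀ K : ℝ} (hα : 0 ≤ α) (hβ : 0 ≤ β) (hb₀ : 0 < b₀)
    (hd₀ : 0 < d₀) (hb : 0 < b) (hd : 0 < d) (hK : 0 ≤ K)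
    (h : ∀ {f g : E → ℝ≥0∞}, Measurable f → Measurable g →
      gaussianForm b₀ d₀ f g ≤ ENNReal.ofReal K ^ Module.finrank ℝ E *
        ((∫⁻ v, f v ^ (1 / α) ∂normalizedVolume E) ^ α *
          (∫⁻ x, g x ^ (1 / β) ∂normalizedVolume E) ^ β))
    (hf : Measurable f) (hg : Measurable g) :
    gaussianForm b d f g ≤
      ENNReal.ofReal (K * (b₀ / b) ^ (1 - α) * (d₀ / d) ^ (1 - β)) ^ Module.finrank ℝ E *
        ((∫⁻ v, f v ^ (1 / α) ∂normalizedVolume E) ^ α *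
          (∫⁻ x, g x ^ (1 / β) ∂normalizedVolume E) ^ β) := by
  obtain ⟨c, hc, hbc⟩ : ∃ c, 0 < c ∧ b₀ / b = c := ⟨_, by positivity, rfl⟩
  obtain ⟨e, he, hde⟩ : ∃ e, 0 < e ∧ d₀ / d = e := ⟨_, by positivity, rfl⟩
  have hscaled := h (f := fun v => f (c • v)) (g := fun x => g (e • x)) (by fun_prop) (by fun_prop)
  rw [lintegral_comp_smul_rpow hc hα fun v => f v ^ (1 / α),
    lintegral_comp_smul_rpow he hβ fun x => g x ^ (1 / β)] at hscaled
  have hconst : K * c ^ (1 - α) * e ^ (1 - β) = c * e * (K * c ^ (-α) * e ^ (-β)) := by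
    rw [sub_eq_add_neg, sub_eq_add_neg, Real.rpow_add hc, Real.rpow_add he, Real.rpow_one,
      Real.rpow_one]
    ring
  rw [gaussianForm_eq_mul_comp_smul hc he, ← hbc, ← hde, mul_div_cancel₀ _ hb.ne',
    mul_div_cancel₀ _ hd.ne', hbc, hde]
  refine (mul_le_mul' le_rfl hscaled).trans_eq ?_
  rw [hconst, ENNReal.ofReal_mul (p := c * e) (by positivity),
    ENNReal.ofReal_mul (p := K * c ^ (-α)) (by positivity), ENNReal.ofReal_mul hK]
  ring

/-- The constant, per dimension, in the bound of `gaussianForm b d f g` by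
`‖f‖_{1/α} ‖g‖_{1/β}`. -/
noncomputable def gaussianFormConst (α β b d : ℝ) : ℝ :=
  √((α + β - 1) / (α * β)) * (√(α * (1 - α) / (α + β - 1)) / b) ^ (1 - α) *
    (√(β * (1 - β) / (α + β - 1)) / d) ^ (1 - β)

theorem gaussianForm_le (hα : 0 < α) (hα1 : α < 1) (hβ : 0 < β) (hβ1 : β < 1)
    (hαβ : 1 < α + β) (hb : 0 < b) (hd : 0 < d) (hf : Measurable f) (hg : Measurable g) :
    gaussianForm b d f g ≤ ENNReal.ofReal (gaussianFormConst α β b d) ^ Module.finrank ℝ E *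
      ((∫⁻ v, f v ^ (1 / α) ∂normalizedVolume E) ^ α *
        (∫⁻ x, g x ^ (1 / β) ∂normalizedVolume E) ^ β) := by
  have : 0 < 1 - α := by linarith
  have : 0 < 1 - β := by linarith
  have : 0 < α + β - 1 := by linarith
  exact gaussianForm_le_of_forall_le hα.le hβ.le (by positivity) (by positivity) hb hd
    (Real.sqrt_nonneg _) (gaussianForm_le_of_critical hα hα1 hβ hβ1 hαβ) hf hg

end GaussianForm

/-! ### The Ornstein–Uhlenbeck bound -/

lemma rpow_lintegral_le_of_forall_lintegral_mul_le {X : Type*} [MeasurableSpace X] {μ : Measure X}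
    [IsFiniteMeasure μ] {p q : ℝ} (hpq : p.HolderConjugate q) {A : ℝ≥0∞} {h : X → ℝ≥0∞}
    (hh : Measurable h)
    (H : ∀ g : X → ℝ≥0∞, Measurable g →
      ∫⁻ x, h x * g x ∂μ ≤ A * (∫⁻ x, g x ^ q ∂μ) ^ (1 / q)) :
    (∫⁻ x, h x ^ p ∂μ) ^ (1 / p) ≤ A := by
  rw [one_div, ENNReal.rpow_inv_le_iff hpq.pos]
  rw [lintegral_congr fun x => (iSup_min_natCast_rpow (h x) hpq.nonneg).symm,
    lintegral_iSup (fun k => by fun_prop)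
      fun i j hij x => by dsimp only; gcongr; exact hpq.nonneg]
  refine iSup_le fun k => ?_
  have htest := H (fun x => min (h x) k ^ (p - 1)) (by fun_prop)
  simp only [← ENNReal.rpow_mul, hpq.sub_one_mul_conj] at htest
  have hfin : ∫⁻ x, min (h x) k ^ p ∂μ ≠ ∞ := by
    refine ((lintegral_mono fun x => ENNReal.rpow_le_rpow (min_le_right _ _) hpq.nonneg).trans_lt
      ?_).ne
    simpa using ENNReal.mul_lt_top
      (ENNReal.rpow_lt_top_of_nonneg hpq.nonneg (ENNReal.natCast_ne_top k)) (measure_lt_top μ _)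
  have hself : ∫⁻ x, min (h x) k ^ p ∂μ ≤ A * (∫⁻ x, min (h x) k ^ p ∂μ) ^ (1 / q) := by
    refine (lintegral_mono fun x => ?_).trans htest
    calc min (h x) k ^ p = min (h x) k * min (h x) k ^ (p - 1) := by
          nth_rw 2 [← ENNReal.rpow_one (min (h x) k)]
          rw [← ENNReal.rpow_add_of_nonneg _ _ zero_le_one hpq.sub_one_pos.le, add_sub_cancel]
      _ ≤ h x * min (h x) k ^ (p - 1) := by gcongr; exact min_le_left _ _
  rw [← ENNReal.rpow_inv_le_iff hpq.pos]
  generalize ∫⁻ x, min (h x) k ^ p ∂μ = I at hfin hself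
  rcases eq_or_ne I 0 with rfl | hI
  · simp [hpq.pos]
  · rw [← ENNReal.mul_le_mul_iff_left (c := I ^ (1 / q)) (by simp [hI, hfin]) (by simp [hI, hfin]),
      ← ENNReal.rpow_add _ _ hI hfin, one_div, hpq.inv_add_inv_eq_one, ENNReal.rpow_one]
    simpa using hself

section Mehler

variable {E : Type*} [NormedAddCommGroup E] [InnerProductSpace ℝ E] [FiniteDimensional ℝ E]
  [MeasurableSpace E] [BorelSpace E] {s c α β q₁ q₂ : ℝ}

lemma lintegral_rpow_mul_gaussianWeight_rpow {c : ℝ} (hc : 0 < c) (hα : 0 < α) {h : E → ℝ≥0∞}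
    (hh : Measurable h) :
    (∫⁻ x, (h x * gaussianWeight (α * (c ^ 2)⁻¹) x) ^ (1 / α) ∂normalizedVolume E) ^ α =
      ENNReal.ofReal (c ^ α) ^ Module.finrank ℝ E *
        (∫⁻ x, h (c • x) ^ (1 / α) ∂stdGaussian E) ^ α := by
  rw [lintegral_eq_mul_lintegral_comp_smul hc, ofReal_pow_mul_rpow hc _ _ hα.le,
    lintegral_stdGaussian (by fun_prop)]
  congr 3
  refine funext fun x => ?_
  rw [ENNReal.mul_rpow_of_nonneg _ _ (by positivity), gaussianWeight_rpow _ (by positivity),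
    gaussianWeight_smul, mul_comm]
  congr 2
  field_simp

/-- `hrel` is the condition under which the Gaussian weights left over from the kernel of the
correlated pair are exactly those that turn the two Lebesgue norms back into Gaussian ones. -/
theorem lintegral_mul_correlatedPair_stdGaussian_le (hs : 0 < s) (hs1 : s < 1) (hc : 0 < c)
    (hα : 0 < α) (hα1 : α < 1) (hβ : 0 < β) (hβ1 : β < 1) (hαβ : 1 < α + β)
    (hrel : c ^ 2 * (1 - β) = α * (1 - (1 - s ^ 2) * β)) {f g : E → ℝ≥0∞} (hf : Measurable f)
    (hg : Measurable g) :
    ∫⁻ p, f p.1 * g p.2 ∂correlatedPair (stdGaussian E) s ≤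
      ENNReal.ofReal ((√(1 - s ^ 2))⁻¹ *
        gaussianFormConst α β (s / √((1 - s ^ 2) * (1 - (1 - s ^ 2) * β)))
          √((1 - (1 - s ^ 2) * β) / (1 - s ^ 2)) * c ^ α) ^ Module.finrank ℝ E *
        ((∫⁻ x, f (c • x) ^ (1 / α) ∂stdGaussian E) ^ α *
          (∫⁻ x, g x ^ (1 / β) ∂stdGaussian E) ^ β) := by
  have hs2 : s ^ 2 < 1 := by nlinarith
  have hT : 0 < 1 - s ^ 2 := by linarith
  have hu : 0 < 1 - (1 - s ^ 2) * β := by nlinarith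
  have hb : (s / √((1 - s ^ 2) * (1 - (1 - s ^ 2) * β))) ^ 2 + α * (c ^ 2)⁻¹ = (1 - s ^ 2)⁻¹ := by
    have hβ' : 0 < 1 - β := by linarith
    rw [eq_div_of_mul_eq hβ'.ne' hrel, div_pow, Real.sq_sqrt (by positivity)]
    field_simp
    ring
  have hd : √((1 - (1 - s ^ 2) * β) / (1 - s ^ 2)) ^ 2 + β = (1 - s ^ 2)⁻¹ := by
    rw [Real.sq_sqrt (by positivity)]
    field_simp
    ring
  have hbd : s / √((1 - s ^ 2) * (1 - (1 - s ^ 2) * β)) * √((1 - (1 - s ^ 2) * β) / (1 - s ^ 2)) =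
      s * (1 - s ^ 2)⁻¹ := by
    rw [Real.sqrt_mul hT.le, Real.sqrt_div hu.le]
    field_simp
    rw [Real.sq_sqrt hT.le]
  rw [lintegral_correlatedPair_stdGaussian hs2 hb hd hbd hf hg]
  refine (mul_le_mul' le_rfl (gaussianForm_le hα hα1 hβ hβ1 hαβ (by positivity) (by positivity)
    (by fun_prop) (by fun_prop))).trans_eq ?_
  have hg_norm := lintegral_rpow_mul_gaussianWeight_rpow one_pos hβ hg
  simp only [one_pow, inv_one, mul_one, one_smul, Real.one_rpow, ENNReal.ofReal_one, one_mul]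
    at hg_norm
  rw [lintegral_rpow_mul_gaussianWeight_rpow hc hα hf, hg_norm,
    ENNReal.ofReal_mul (q := c ^ α) (by unfold gaussianFormConst; positivity),
    ENNReal.ofReal_mul (by positivity)]
  ring

/-- `M` of the dimensional bound, with `s = e^{-t}` and `c = e^{-a/2}`. -/
noncomputable def mehlerConst (s c q₁ q₂ : ℝ) : ℝ :=
  ((q₁ - 1) / s ^ 2) ^ (1 - 1 / q₁) * ((q₂ - 1) / c ^ 2) ^ (1 / q₂ - 1) *
    ((1 - s ^ 2) / (q₂ - q₁)) ^ (1 / q₂ - 1 / q₁)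

lemma mehlerConst_nonneg (hq₁ : 1 ≤ q₁) (hq : q₁ ≤ q₂) (hs : s ^ 2 ≤ 1) :
    0 ≤ mehlerConst s c q₁ q₂ := by
  have : 0 ≤ q₁ - 1 := by linarith
  have : 0 ≤ q₂ - 1 := by linarith
  have : 0 ≤ q₂ - q₁ := by linarith
  have : 0 ≤ 1 - s ^ 2 := by linarith
  unfold mehlerConst
  positivity

lemma sq_gaussianFormConst_one_div {b d : ℝ} (hq₁ : 1 < q₁) (hq : q₁ < q₂) (hb : 0 ≤ b)
    (hd : 0 ≤ d) :
    gaussianFormConst (1 / q₁) (1 - 1 / q₂) b d ^ 2 = (q₂ - q₁) / (q₂ - 1) *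
      ((q₁ - 1) * q₂ / ((q₂ - q₁) * q₁) / b ^ 2) ^ (1 - 1 / q₁) *
        ((q₂ - 1) * q₁ / ((q₂ - q₁) * q₂) / d ^ 2) ^ (1 / q₂) := by
  have hA : 0 < q₁ - 1 := by linarith
  have hB : 0 < q₂ - 1 := by linarith
  have hD : 0 < q₂ - q₁ := by linarith
  have : 0 < q₁ := by linarith
  have : 0 < q₂ := by linarith
  have hsum : 1 / q₁ + (1 - 1 / q₂) - 1 = (q₂ - q₁) / (q₁ * q₂) := by
    field_simp
    ring
  have hprod : (q₂ - q₁) / (q₁ * q₂) / (1 / q₁ * (1 - 1 / q₂)) = (q₂ - q₁) / (q₂ - 1) := by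
    field_simp
  have hb₀ : 1 / q₁ * (1 - 1 / q₁) / ((q₂ - q₁) / (q₁ * q₂)) =
      (q₁ - 1) * q₂ / ((q₂ - q₁) * q₁) := by
    field_simp
  have hd₀ : (1 - 1 / q₂) * (1 / q₂) / ((q₂ - q₁) / (q₁ * q₂)) =
      (q₂ - 1) * q₁ / ((q₂ - q₁) * q₂) := by
    field_simp
  rw [gaussianFormConst, sub_sub_cancel, hsum, hprod, hb₀, hd₀, mul_pow, mul_pow,
    Real.rpow_pow_comm (by positivity), Real.rpow_pow_comm (by positivity), div_pow, div_pow,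
    Real.sq_sqrt (by positivity), Real.sq_sqrt (by positivity), Real.sq_sqrt (by positivity)]

lemma rpow_mul_rpow_collect {P Q R e : ℝ} (hP : 0 < P) (hQ : 0 < Q) (hR : 0 < R) (he : 0 < e)
    (x y : ℝ) :
    (R * Q * e)⁻¹ * (P * e * R) ^ (1 - x) * (Q * R) ^ y * e ^ x =
      P ^ (1 - x) * Q ^ (y - 1) * R ^ (y - x) := by
  rw [Real.mul_rpow (by positivity) hR.le, Real.mul_rpow hP.le he.le, Real.mul_rpow hQ.le hR.le,
    show y - x = (1 - x) + y - 1 by ring, Real.rpow_sub_one hR.ne', Real.rpow_add hR,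
    Real.rpow_sub_one hQ.ne', Real.rpow_sub he 1 x, Real.rpow_one]
  field_simp

lemma mul_gaussianFormConst_eq_sqrt_mehlerConst (hs : 0 < s) (hs1 : s < 1) (hc : 0 < c)
    (hq₁ : 1 < q₁) (hq : q₁ < q₂) (hrel : q₁ * c ^ 2 = 1 + s ^ 2 * (q₂ - 1)) :
    (√(1 - s ^ 2))⁻¹ * gaussianFormConst (1 / q₁) (1 - 1 / q₂)
      (s / √((1 - s ^ 2) * (1 - (1 - s ^ 2) * (1 - 1 / q₂))))
      √((1 - (1 - s ^ 2) * (1 - 1 / q₂)) / (1 - s ^ 2)) * c ^ (1 / q₁) =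
        √(mehlerConst s c q₁ q₂) := by
  have hT : 0 < 1 - s ^ 2 := by nlinarith
  have hA : 0 < q₁ - 1 := by linarith
  have hB : 0 < q₂ - 1 := by linarith
  have hD : 0 < q₂ - q₁ := by linarith
  have hq₂0 : 0 < q₂ := by linarith
  have hu : 1 - (1 - s ^ 2) * (1 - 1 / q₂) = q₁ * c ^ 2 / q₂ := by
    rw [hrel]
    field_simp
    ring
  have hfactor : (1 - s ^ 2)⁻¹ * ((q₂ - q₁) / (q₂ - 1)) =
      ((1 - s ^ 2) / (q₂ - q₁) * ((q₂ - 1) / c ^ 2) * c ^ 2)⁻¹ := by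
    field_simp
  have hfactor_b : (q₁ - 1) * q₂ / ((q₂ - q₁) * q₁) /
      (s / √((1 - s ^ 2) * (q₁ * c ^ 2 / q₂))) ^ 2 =
        (q₁ - 1) / s ^ 2 * c ^ 2 * ((1 - s ^ 2) / (q₂ - q₁)) := by
    rw [div_pow, Real.sq_sqrt (by positivity)]
    field_simp
  have hfactor_d : (q₂ - 1) * q₁ / ((q₂ - q₁) * q₂) / √(q₁ * c ^ 2 / q₂ / (1 - s ^ 2)) ^ 2 =
      (q₂ - 1) / c ^ 2 * ((1 - s ^ 2) / (q₂ - q₁)) := by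
    rw [Real.sq_sqrt (by positivity)]
    field_simp
  rw [hu, eq_comm, Real.sqrt_eq_iff_eq_sq (by unfold mehlerConst; positivity)
    (by unfold gaussianFormConst; positivity), mul_pow, mul_pow, inv_pow, Real.sq_sqrt hT.le,
    Real.rpow_pow_comm hc.le, sq_gaussianFormConst_one_div hq₁ hq (by positivity) (by positivity),
    hfactor_b, hfactor_d, ← mul_assoc, ← mul_assoc, hfactor]
  exact (rpow_mul_rpow_collect (by positivity) (by positivity) (by positivity) (by positivity)
    _ _).symm

theorem rpow_lintegral_mehler_le (hs : 0 < s) (hs1 : s < 1) (hc : 0 < c) (hq₁ : 1 < q₁)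
    (hq : q₁ < q₂) (hrel : q₁ * c ^ 2 = 1 + s ^ 2 * (q₂ - 1)) {f : E → ℝ≥0∞}
    (hf : Measurable f) :
    (∫⁻ x, (∫⁻ y, f (s • x + √(1 - s ^ 2) • y) ∂stdGaussian E) ^ q₂ ∂stdGaussian E) ^ (1 / q₂) ≤
      ENNReal.ofReal √(mehlerConst s c q₁ q₂) ^ Module.finrank ℝ E *
        (∫⁻ x, f (c • x) ^ q₁ ∂stdGaussian E) ^ (1 / q₁) := by
  have hq₁0 : 0 < q₁ := by linarith
  have hq₂0 : 0 < q₂ := by linarith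
  have hα1 : 1 / q₁ < 1 := (div_lt_one hq₁0).2 hq₁
  have hβ : 1 / q₂ < 1 := (div_lt_one hq₂0).2 (hq₁.trans hq)
  have hαβ : 1 / q₂ < 1 / q₁ := one_div_lt_one_div_of_lt hq₁0 hq
  have hrel' : c ^ 2 * (1 - (1 - 1 / q₂)) = 1 / q₁ * (1 - (1 - s ^ 2) * (1 - 1 / q₂)) := by
    field_simp
    linear_combination hrel
  have hconj : q₂.HolderConjugate (1 - 1 / q₂)⁻¹ := by
    rw [Real.holderConjugate_iff]
    exact ⟨hq₁.trans hq, by simp⟩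
  refine rpow_lintegral_le_of_forall_lintegral_mul_le hconj (by fun_prop) fun g hg => ?_
  have hdual := lintegral_mul_correlatedPair_stdGaussian_le hs hs1 hc (one_div_pos.2 hq₁0) hα1
    (sub_pos.2 hβ) (by simpa using hq₂0) (by linarith) hrel' hf hg
  rw [mul_gaussianFormConst_eq_sqrt_mehlerConst hs hs1 hc hq₁ hq hrel, one_div_one_div,
    lintegral_correlatedPair (by fun_prop), ← mul_assoc] at hdual
  have hpull (x : E) : ∫⁻ y, f (s • x + √(1 - s ^ 2) • y) * g x ∂stdGaussian E =
      (∫⁻ y, f (s • x + √(1 - s ^ 2) • y) ∂stdGaussian E) * g x :=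
    lintegral_mul_const _ (by fun_prop)
  simpa [hpull] using hdual

end Mehler

lemma gaussianMeasure_eq_stdGaussian (n : ℕ) :
    gaussianMeasure n = stdGaussian (EuclideanSpace ℝ (Fin n)) := by
  rw [stdGaussian_eq_withDensity, normalizedVolume, withDensity_smul_measure,
    ← withDensity_smul _ (measurable_gaussianWeight 1), gaussianMeasure, finrank_euclideanSpace_fin]
  congr 1
  funext x
  rw [Pi.smul_apply, smul_eq_mul, gaussianWeight, one_mul, ENNReal.ofReal_mul (by positivity)]

lemma enorm_OU_le (n : ℕ) (t : ℝ) (f : EuclideanSpace ℝ (Fin n) → ℝ)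
    (x : EuclideanSpace ℝ (Fin n)) :
    ‖OU n t f x‖ₑ ≤
      ∫⁻ y, ‖f (Real.exp (-t) • x + √(1 - Real.exp (-2 * t)) • y)‖ₑ ∂stdGaussian _ := by
  rw [OU, gaussianMeasure_eq_stdGaussian]
  exact enorm_integral_le_lintegral_enorm _

lemma ofReal_sqrt_pow {M : ℝ} (hM : 0 ≤ M) (n : ℕ) :
    ENNReal.ofReal √M ^ n = ENNReal.ofReal (M ^ ((n : ℝ) / 2)) := by
  rw [← ENNReal.ofReal_pow (Real.sqrt_nonneg _), Real.rpow_div_two_eq_sqrt _ hM, Real.rpow_natCast]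

lemma eLpNorm_ofReal_eq_lintegral {X : Type*} [MeasurableSpace X] {μ : Measure X} {q : ℝ}
    (hq : 0 < q) (f : X → ℝ) :
    eLpNorm f (ENNReal.ofReal q) μ = (∫⁻ x, ‖f x‖ₑ ^ q ∂μ) ^ (1 / q) := by
  rw [eLpNorm_eq_lintegral_rpow_enorm_toReal (by simpa) ENNReal.ofReal_ne_top,
    ENNReal.toReal_ofReal hq.le]

theorem dimensional_hypercontractivity_OU_general (n : ℕ) {t a q₁ q₂ : ℝ} (ht : 0 < t)
    (hq₁ : 1 < q₁) (hq : q₁ < q₂)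
    (hrel : q₂ - 1 = Real.exp (2 * t) * (q₁ * Real.exp (-a) - 1))
    {f : EuclideanSpace ℝ (Fin n) → ℝ} (hf : Measurable f) :
    eLpNorm (OU n t f) (ENNReal.ofReal q₂) (gaussianMeasure n) ≤
      ENNReal.ofReal
        ((((q₁ - 1) / Real.exp (-2 * t)) ^ (1 - 1 / q₁) *
          ((q₂ - 1) / Real.exp (-a)) ^ (1 / q₂ - 1) *
          ((1 - Real.exp (-2 * t)) / (q₂ - q₁)) ^ (1 / q₂ - 1 / q₁)) ^ ((n : ℝ) / 2)) *
        eLpNorm (dilation n (-a) f) (ENNReal.ofReal q₁) (gaussianMeasure n) := by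
  have hs2 : Real.exp (-t) ^ 2 = Real.exp (-2 * t) := by
    rw [← Real.exp_nat_mul]
    ring_nf
  have hc2 : Real.exp (-a / 2) ^ 2 = Real.exp (-a) := by
    rw [← Real.exp_nat_mul]
    ring_nf
  have hrel' : q₁ * Real.exp (-a / 2) ^ 2 = 1 + Real.exp (-t) ^ 2 * (q₂ - 1) := by
    rw [hc2, hs2, hrel, ← mul_assoc, ← Real.exp_add]
    simp
  have hq₂0 : 0 < q₂ := by linarith
  have hM : 0 ≤ mehlerConst (Real.exp (-t)) (Real.exp (-a / 2)) q₁ q₂ :=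
    mehlerConst_nonneg hq₁.le hq.le (by rw [hs2, Real.exp_le_one_iff]; linarith)
  have hbound := rpow_lintegral_mehler_le (Real.exp_pos (-t))
    (Real.exp_lt_one_iff.2 (by linarith)) (Real.exp_pos (-a / 2)) hq₁ hq hrel' hf.enorm
  rw [finrank_euclideanSpace_fin, ofReal_sqrt_pow hM, mehlerConst, hs2, hc2] at hbound
  rw [gaussianMeasure_eq_stdGaussian, eLpNorm_ofReal_eq_lintegral hq₂0,
    eLpNorm_ofReal_eq_lintegral (by linarith)]
  refine le_trans ?_ hbound
  gcongr with x
  exact enorm_OU_le n t f x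

theorem dimensional_hypercontractivity_OU (n : ℕ) (hn : 1 ≤ n) (t : ℝ) (ht : 0 < t) (a : ℝ)
    (q₁ q₂ : ℝ) (hq₁ : 1 < q₁) (hq : q₁ < q₂)
    (hrel : q₂ - 1 = Real.exp (2 * t) * (q₁ * Real.exp (-a) - 1))
    (f : EuclideanSpace ℝ (Fin n) → ℝ) (hf : Measurable f)
    (c C : ℝ) (hc : 0 < c) (hbd : ∀ x, c ≤ f x ∧ f x ≤ C) :
    eLpNorm (OU n t f) (ENNReal.ofReal q₂) (gaussianMeasure n) ≤
      ENNReal.ofReal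
        ((((q₁ - 1) / Real.exp (-2 * t)) ^ (1 - 1 / q₁) *
          ((q₂ - 1) / Real.exp (-a)) ^ (1 / q₂ - 1) *
          ((1 - Real.exp (-2 * t)) / (q₂ - q₁)) ^ (1 / q₂ - 1 / q₁)) ^ ((n : ℝ) / 2)) *
        eLpNorm (dilation n (-a) f) (ENNReal.ofReal q₁) (gaussianMeasure n) := by
  exact dimensional_hypercontractivity_OU_general n ht hq₁ hq hrel hf
end

section
/- Let n ≥ 1, let u > 0, t > 0 and let q₁ > q₂ > 0 satisfy q₁ = q₂ + t/(2u). Then for every bounded Lipschitz function f : ℝ^n → ℝ and every x ∈ ℝ^n, ( P_u( e^{q₁ Q_t f} )(x) )^{1/q₁} ≤ ( P_u( e^{q₂ f} )(x) )^{1/q₂} (local hypercontractivity of the Hamilton–Jacobi semigroup for the heat semigroup on ℝ^n, which satisfies CD(0,∞)). -/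
open MeasureTheory Real

/-- Euclidean heat semigroup, with `heat n 0 f = f`. -/
noncomputable def heat (n : ℕ) (t : ℝ) (f : EuclideanSpace ℝ (Fin n) → ℝ)
    (x : EuclideanSpace ℝ (Fin n)) : ℝ :=
  if t = 0 then f x
  else (4 * π * t) ^ (-(n : ℝ) / 2) * ∫ y, f y * Real.exp (-‖x - y‖ ^ 2 / (4 * t))

/-- Hopf-Lax (Hamilton-Jacobi) semigroup on `ℝ^n`. -/
noncomputable def hopfLax (n : ℕ) (t : ℝ) (f : EuclideanSpace ℝ (Fin n) → ℝ)
    (x : EuclideanSpace ℝ (Fin n)) : ℝ :=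
  ⨅ y : EuclideanSpace ℝ (Fin n), (f y + ‖x - y‖ ^ 2 / (2 * t))

/-!
Multiplying by the density of a heat kernel `γ` of variance `2u` turns the Prékopa–Leindler
inequality on `ℝ^n` into a curved one: if `F(y)^a G(z)^b ≤ exp(a b |y - z|² / (4u)) H(a y + b z)`
then `(∫ F dγ)^a (∫ G dγ)^b ≤ ∫ H dγ`, because the weighted parallelogram identity makes the
Gaussian density log-concave with exactly this defect. Take `F = exp(q₁ Q_t f)`, `G = 1`,
`H = exp(q₂ f)` and `a = q₂ / q₁`. Testing the infimum `Q_t f(y)` at `w = a y + b z` gives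
`q₂ Q_t f(y) ≤ q₂ f(w) + q₂ b² |y - z|² / (2t)`, and `t = 2u (q₁ - q₂)` is what makes the last term
equal to `a b |y - z|² / (4u)`.
-/

open scoped ENNReal Pointwise

/-! ### The Prékopa–Leindler inequality -/

/-- The Prékopa–Leindler inequality for the measure `μ`: an integral form, for functions with values
in `[0, ∞]`, of the Brunn–Minkowski inequality. All pairs of positive weights are included, so that
the property passes to product measures. -/
def PrekopaLeindler {E : Type*} [AddCommGroup E] [Module ℝ E] [MeasurableSpace E]
    (μ : Measure E) : Prop :=
  ∀ a b : ℝ, 0 < a → 0 < b → a + b = 1 → ∀ f g h : E → ℝ≥0∞,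
    Measurable f → Measurable g → Measurable h →
    (∀ x y, f x ^ a * g y ^ b ≤ h (a • x + b • y)) →
    (∫⁻ x, f x ∂μ) ^ a * (∫⁻ x, g x ∂μ) ^ b ≤ ∫⁻ x, h x ∂μ

theorem ennreal_geom_mean_le_arith_mean2_weighted {a b : ℝ} (ha : 0 < a) (hb : 0 < b)
    (hab : a + b = 1) (x y : ℝ≥0∞) :
    x ^ a * y ^ b ≤ ENNReal.ofReal a * x + ENNReal.ofReal b * y := by
  have hpq : (a⁻¹).HolderConjugate b⁻¹ :=
    Real.holderConjugate_iff.2 ⟨(one_lt_inv₀ ha).2 (by linarith), by simpa using hab⟩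
  simpa [← ENNReal.rpow_mul, ha.ne', hb.ne', ENNReal.ofReal_inv_of_pos, ha, hb, div_eq_mul_inv,
    mul_comm] using ENNReal.young_inequality (x ^ a) (y ^ b) hpq

theorem ennreal_iSup_rpow {ι : Sort*} (f : ι → ℝ≥0∞) {a : ℝ} (ha : 0 < a) :
    (⨆ i, f i) ^ a = ⨆ i, f i ^ a :=
  (ENNReal.orderIsoRpow a ha).map_iSup f

section Lintegral

variable {α : Type*} [MeasurableSpace α] (μ : Measure α) {f : α → ℝ≥0∞}

theorem lintegral_eq_lintegral_meas_lt_of_ne_top (hf : Measurable f) (hfin : ∀ x, f x ≠ ∞) :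
    ∫⁻ x, f x ∂μ = ∫⁻ r in Set.Ioi (0 : ℝ), μ {x | ENNReal.ofReal r < f x} := by
  calc ∫⁻ x, f x ∂μ = ∫⁻ x, ENNReal.ofReal (f x).toReal ∂μ := by
        simp only [ENNReal.ofReal_toReal (hfin _)]
    _ = ∫⁻ r in Set.Ioi (0 : ℝ), μ {x | r < (f x).toReal} :=
        lintegral_eq_lintegral_meas_lt μ (.of_forall fun _ => ENNReal.toReal_nonneg)
          hf.ennreal_toReal.aemeasurable
    _ = ∫⁻ r in Set.Ioi (0 : ℝ), μ {x | ENNReal.ofReal r < f x} :=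
        setLIntegral_congr_fun measurableSet_Ioi fun r hr => by
          simp only [ENNReal.ofReal_lt_iff_lt_toReal (le_of_lt hr) (hfin _)]

theorem lintegral_eq_iSup_lintegral_min_natCast (hf : Measurable f) :
    ∫⁻ x, f x ∂μ = ⨆ k : ℕ, ∫⁻ x, min (f x) k ∂μ := by
  rw [← lintegral_iSup (fun k => hf.min measurable_const)
    (fun i j hij x => min_le_min_left _ (Nat.cast_le.2 hij))]
  simp_rw [← inf_iSup_eq, ENNReal.iSup_natCast, inf_top_eq]

end Lintegral

section BrunnMinkowskiReal

variable {A B : Set ℝ}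

theorem volume_add_volume_le_volume_add_of_isCompact (hA : IsCompact A) (hB : IsCompact B)
    (hA' : A.Nonempty) (hB' : B.Nonempty) : volume A + volume B ≤ volume (A + B) := by
  obtain ⟨p, hpA, hp⟩ := hA.exists_isGreatest hA'
  obtain ⟨q, hqB, hq⟩ := hB.exists_isLeast hB'
  -- The translates `min B + A` and `max A + B` lie in `A + B` and share only `max A + min B`.
  have hsub : (q +ᵥ A) ∪ (p +ᵥ B) ⊆ A + B := by
    rintro _ (⟨x, hx, rfl⟩ | ⟨y, hy, rfl⟩)
    · exact ⟨x, hx, q, hqB, add_comm x q⟩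
    · exact ⟨p, hpA, y, hy, rfl⟩
  have hinter : (q +ᵥ A) ∩ (p +ᵥ B) ⊆ {p + q} := by
    rintro _ ⟨⟨x, hx, rfl⟩, ⟨y, hy, hxy⟩⟩
    have hxp := hp hx
    have hqy := hq hy
    simp only [vadd_eq_add, Set.mem_singleton_iff] at hxy ⊢
    linarith
  have hdisj : AEDisjoint volume (q +ᵥ A) (p +ᵥ B) := measure_mono_null hinter (by simp)
  calc volume A + volume B = volume (q +ᵥ A) + volume (p +ᵥ B) := by simp only [measure_vadd]
    _ = volume ((q +ᵥ A) ∪ (p +ᵥ B)) :=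
        (measure_union₀ (hB.measurableSet.const_vadd p).nullMeasurableSet hdisj).symm
    _ ≤ volume (A + B) := measure_mono hsub

theorem volume_add_volume_le_volume_add (hA : MeasurableSet A) (hB : MeasurableSet B)
    (hA' : A.Nonempty) (hB' : B.Nonempty) : volume A + volume B ≤ volume (A + B) := by
  obtain ⟨p, hp⟩ := hA'
  obtain ⟨q, hq⟩ := hB'
  rw [hA.measure_eq_iSup_isCompact, hB.measure_eq_iSup_isCompact]
  simp only [iSup_and']
  refine ENNReal.biSup_add_biSup_le' ⟨∅, Set.empty_subset _, isCompact_empty⟩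
    ⟨∅, Set.empty_subset _, isCompact_empty⟩ ?_
  rintro K ⟨hKA, hK⟩ K' ⟨hKB, hK'⟩
  have hsub : insert p K + insert q K' ⊆ A + B :=
    Set.add_subset_add (Set.insert_subset hp hKA) (Set.insert_subset hq hKB)
  calc volume K + volume K' ≤ volume (insert p K) + volume (insert q K') := by
        gcongr <;> exact Set.subset_insert _ _
    _ ≤ volume (insert p K + insert q K') :=
        volume_add_volume_le_volume_add_of_isCompact (hK.insert p) (hK'.insert q)
          (Set.insert_nonempty _ _) (Set.insert_nonempty _ _)
    _ ≤ volume (A + B) := measure_mono hsub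

theorem mul_volume_add_mul_volume_le_volume_add {a b : ℝ} (ha : 0 ≤ a) (hb : 0 ≤ b)
    (hA : MeasurableSet A) (hB : MeasurableSet B) (hA' : A.Nonempty) (hB' : B.Nonempty) :
    ENNReal.ofReal a * volume A + ENNReal.ofReal b * volume B ≤ volume (a • A + b • B) := by
  simpa [Measure.addHaar_smul, abs_of_nonneg ha, abs_of_nonneg hb] using
    volume_add_volume_le_volume_add (hA.const_smul₀ a) (hB.const_smul₀ b) hA'.smul_set hB'.smul_set

end BrunnMinkowskiReal

section PrekopaLeindlerReal

variable {a b : ℝ} {f g h : ℝ → ℝ≥0∞}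

theorem mul_volume_lt_add_mul_volume_lt_le (ha : 0 < a) (hb : 0 < b) (hab : a + b = 1)
    (hf : Measurable f) (hg : Measurable g)
    (H : ∀ x y, f x ^ a * g y ^ b ≤ h (a • x + b • y)) {r : ℝ≥0∞}
    (hrf : r < ⨆ x, f x) (hrg : r < ⨆ x, g x) :
    ENNReal.ofReal a * volume {x | r < f x} + ENNReal.ofReal b * volume {x | r < g x} ≤
      volume {x | r < h x} := by
  refine (mul_volume_add_mul_volume_le_volume_add ha.le hb.le (measurableSet_lt measurable_const hf)
    (measurableSet_lt measurable_const hg) (lt_iSup_iff.1 hrf) (lt_iSup_iff.1 hrg)).trans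
    (measure_mono ?_)
  rintro _ ⟨_, ⟨x, hx, rfl⟩, _, ⟨y, hy, rfl⟩, rfl⟩
  calc r = r ^ a * r ^ b := by
        rw [← ENNReal.rpow_add_of_nonneg _ _ ha.le hb.le, hab, ENNReal.rpow_one]
    _ < f x ^ a * g y ^ b :=
        ENNReal.mul_lt_mul (ENNReal.rpow_lt_rpow hx ha) (ENNReal.rpow_lt_rpow hy hb)
    _ ≤ h (a • x + b • y) := H x y

theorem mul_lintegral_add_mul_lintegral_le_of_iSup_eq_one (ha : 0 < a) (hb : 0 < b)
    (hab : a + b = 1) (hf : Measurable f) (hg : Measurable g) (hh : Measurable h)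
    (hf1 : ⨆ x, f x = 1) (hg1 : ⨆ x, g x = 1)
    (H : ∀ x y, f x ^ a * g y ^ b ≤ h (a • x + b • y)) :
    ENNReal.ofReal a * (∫⁻ x, f x) + ENNReal.ofReal b * ∫⁻ x, g x ≤ ∫⁻ x, h x := by
  have hfle : ∀ x, f x ≤ 1 := fun x => hf1 ▸ le_iSup f x
  have hgle : ∀ x, g x ≤ 1 := fun x => hg1 ▸ le_iSup g x
  have hlevel : ∀ r : ℝ≥0∞, ENNReal.ofReal a * volume {x | r < f x} +
      ENNReal.ofReal b * volume {x | r < g x} ≤ volume {x | r < min (h x) 1} := by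
    intro r
    rcases lt_or_ge r 1 with hr | hr
    · simpa [lt_min_iff, hr] using mul_volume_lt_add_mul_volume_lt_le ha hb hab hf hg H
        (hr.trans_eq hf1.symm) (hr.trans_eq hg1.symm)
    · simp [fun x => ((hfle x).trans hr).not_gt, fun x => ((hgle x).trans hr).not_gt]
  calc ENNReal.ofReal a * (∫⁻ x, f x) + ENNReal.ofReal b * ∫⁻ x, g x
      = (∫⁻ r in Set.Ioi (0 : ℝ), ENNReal.ofReal a * volume {x | ENNReal.ofReal r < f x}) +
        ∫⁻ r in Set.Ioi (0 : ℝ), ENNReal.ofReal b * volume {x | ENNReal.ofReal r < g x} := by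
        rw [lintegral_const_mul' _ _ ENNReal.ofReal_ne_top,
          lintegral_const_mul' _ _ ENNReal.ofReal_ne_top,
          lintegral_eq_lintegral_meas_lt_of_ne_top _ hf fun x =>
            ne_top_of_le_ne_top ENNReal.one_ne_top (hfle x),
          lintegral_eq_lintegral_meas_lt_of_ne_top _ hg fun x =>
            ne_top_of_le_ne_top ENNReal.one_ne_top (hgle x)]
    _ ≤ ∫⁻ r in Set.Ioi (0 : ℝ), (ENNReal.ofReal a * volume {x | ENNReal.ofReal r < f x} +
          ENNReal.ofReal b * volume {x | ENNReal.ofReal r < g x}) := le_lintegral_add _ _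
    _ ≤ ∫⁻ r in Set.Ioi (0 : ℝ), volume {x | ENNReal.ofReal r < min (h x) 1} :=
        lintegral_mono fun r => hlevel (ENNReal.ofReal r)
    _ = ∫⁻ x, min (h x) 1 := (lintegral_eq_lintegral_meas_lt_of_ne_top _
        (hh.min measurable_const) fun x =>
          ne_top_of_le_ne_top ENNReal.one_ne_top (min_le_right _ _)).symm
    _ ≤ ∫⁻ x, h x := lintegral_mono fun x => min_le_left _ _

theorem rpow_lintegral_mul_rpow_lintegral_le_of_iSup_ne_top (ha : 0 < a) (hb : 0 < b)
    (hab : a + b = 1) (hf : Measurable f) (hg : Measurable g) (hh : Measurable h)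
    (hftop : ⨆ x, f x ≠ ∞) (hgtop : ⨆ x, g x ≠ ∞)
    (H : ∀ x y, f x ^ a * g y ^ b ≤ h (a • x + b • y)) :
    (∫⁻ x, f x) ^ a * (∫⁻ x, g x) ^ b ≤ ∫⁻ x, h x := by
  rcases eq_or_ne (⨆ x, f x) 0 with hf0 | hf0
  · simp [ENNReal.iSup_eq_zero.1 hf0, ha]
  rcases eq_or_ne (⨆ x, g x) 0 with hg0 | hg0
  · simp [ENNReal.iSup_eq_zero.1 hg0, hb]
  set M := (⨆ x, f x)⁻¹ with hM
  set N := (⨆ x, g x)⁻¹ with hN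
  set c := M ^ a * N ^ b with hc
  have hmul_rpow (y z : ℝ≥0∞) : (M * y) ^ a * (N * z) ^ b = c * (y ^ a * z ^ b) := by
    rw [ENNReal.mul_rpow_of_nonneg _ _ ha.le, ENNReal.mul_rpow_of_nonneg _ _ hb.le,
      mul_mul_mul_comm]
  have hc0 : c ≠ 0 := by
    simp [hc, hM, hN, ENNReal.rpow_eq_zero_iff, hftop, hgtop, hf0, hg0]
  have hctop : c ≠ ∞ := ENNReal.mul_ne_top
    (ENNReal.rpow_ne_top_of_nonneg ha.le (ENNReal.inv_ne_top.2 hf0))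
    (ENNReal.rpow_ne_top_of_nonneg hb.le (ENNReal.inv_ne_top.2 hg0))
  refine (ENNReal.mul_le_mul_iff_right hc0 hctop).1 ?_
  calc c * ((∫⁻ x, f x) ^ a * (∫⁻ x, g x) ^ b)
      = (∫⁻ x, M * f x) ^ a * (∫⁻ x, N * g x) ^ b := by
        rw [lintegral_const_mul _ hf, lintegral_const_mul _ hg, hmul_rpow]
    _ ≤ ENNReal.ofReal a * (∫⁻ x, M * f x) + ENNReal.ofReal b * ∫⁻ x, N * g x :=
        ennreal_geom_mean_le_arith_mean2_weighted ha hb hab _ _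
    _ ≤ ∫⁻ x, c * h x :=
        mul_lintegral_add_mul_lintegral_le_of_iSup_eq_one ha hb hab (hf.const_mul M)
          (hg.const_mul N) (hh.const_mul c)
          (by rw [← ENNReal.mul_iSup, ENNReal.inv_mul_cancel hf0 hftop])
          (by rw [← ENNReal.mul_iSup, ENNReal.inv_mul_cancel hg0 hgtop])
          fun x y => by rw [hmul_rpow]; gcongr; exact H x y
    _ = c * ∫⁻ x, h x := lintegral_const_mul _ hh

theorem prekopaLeindler_real : PrekopaLeindler (volume : Measure ℝ) := by
  intro a b ha hb hab f g h hf hg hh H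
  rw [lintegral_eq_iSup_lintegral_min_natCast _ hf, lintegral_eq_iSup_lintegral_min_natCast _ hg,
    ennreal_iSup_rpow _ ha, ennreal_iSup_rpow _ hb]
  simp_rw [ENNReal.iSup_mul, ENNReal.mul_iSup, iSup_le_iff]
  have htop (k : ℕ) (φ : ℝ → ℝ≥0∞) : ⨆ x, min (φ x) k ≠ ∞ :=
    ne_top_of_le_ne_top (ENNReal.natCast_ne_top k) (iSup_le fun _ => min_le_right _ _)
  intro k l
  refine rpow_lintegral_mul_rpow_lintegral_le_of_iSup_ne_top ha hb hab (hf.min measurable_const)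
    (hg.min measurable_const) hh (htop k f) (htop l g) fun x y => le_trans ?_ (H x y)
  gcongr <;> exact min_le_left _ _

end PrekopaLeindlerReal

namespace PrekopaLeindler

variable {E F : Type*} [AddCommGroup E] [Module ℝ E] [MeasurableSpace E]
  [AddCommGroup F] [Module ℝ F] [MeasurableSpace F] {μ : Measure E} {ν : Measure F}

theorem prod [SFinite ν] (hμ : PrekopaLeindler μ) (hν : PrekopaLeindler ν) :
    PrekopaLeindler (μ.prod ν) := by
  intro a b ha hb hab f g h hf hg hh H
  rw [lintegral_prod _ hf.aemeasurable, lintegral_prod _ hg.aemeasurable,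
    lintegral_prod _ hh.aemeasurable]
  exact hμ a b ha hb hab _ _ _ hf.lintegral_prod_right' hg.lintegral_prod_right'
    hh.lintegral_prod_right' fun x y => hν a b ha hb hab _ _ _
      (hf.comp measurable_prodMk_left) (hg.comp measurable_prodMk_left)
      (hh.comp measurable_prodMk_left) fun v w => H (x, v) (y, w)

theorem of_measurePreserving (hμ : PrekopaLeindler μ) (e : E →ₗ[ℝ] F)
    (he : MeasurePreserving e μ ν) : PrekopaLeindler ν := by
  intro a b ha hb hab f g h hf hg hh H
  rw [← he.lintegral_comp hf, ← he.lintegral_comp hg, ← he.lintegral_comp hh]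
  refine hμ a b ha hb hab _ _ _ (hf.comp he.measurable) (hg.comp he.measurable)
    (hh.comp he.measurable) fun x y => ?_
  simpa only [Function.comp_apply, map_add, map_smul] using H (e x) (e y)

theorem lintegral_withDensity_le (hμ : PrekopaLeindler μ) {k : E → ℝ≥0∞} (hk : Measurable k)
    {a b : ℝ} (ha : 0 < a) (hb : 0 < b) (hab : a + b = 1) {f g h : E → ℝ≥0∞}
    (hf : Measurable f) (hg : Measurable g) (hh : Measurable h)
    (H : ∀ x y, (k x ^ a * k y ^ b) * (f x ^ a * g y ^ b) ≤
      k (a • x + b • y) * h (a • x + b • y)) :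
    (∫⁻ x, f x ∂μ.withDensity k) ^ a * (∫⁻ x, g x ∂μ.withDensity k) ^ b ≤
      ∫⁻ x, h x ∂μ.withDensity k := by
  rw [lintegral_withDensity_eq_lintegral_mul _ hk hf,
    lintegral_withDensity_eq_lintegral_mul _ hk hg,
    lintegral_withDensity_eq_lintegral_mul _ hk hh]
  refine hμ a b ha hb hab _ _ _ (hk.mul hf) (hk.mul hg) (hk.mul hh) fun x y => ?_
  simpa only [Pi.mul_apply, ENNReal.mul_rpow_of_nonneg _ _ ha.le,
    ENNReal.mul_rpow_of_nonneg _ _ hb.le, mul_mul_mul_comm] using H x y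

end PrekopaLeindler

theorem prekopaLeindler_pi (n : ℕ) : PrekopaLeindler (volume : Measure (Fin n → ℝ)) := by
  induction n with
  | zero =>
    intro a b _ _ _ f g h hf hg hh H
    simpa [Measure.volume_pi_eq_dirac 0, lintegral_dirac' _ hf, lintegral_dirac' _ hg,
      lintegral_dirac' _ hh] using H 0 0
  | succ n ih =>
    refine (prekopaLeindler_real.prod ih).of_measurePreserving
      (Fin.consLinearEquiv ℝ fun _ : Fin (n + 1) => ℝ).toLinearMap ?_
    convert! (volume_preserving_piFinSuccAbove (fun _ : Fin (n + 1) => ℝ) 0).symm using 1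
    ext p i
    refine Fin.cases ?_ (fun j => ?_) i <;> simp [MeasurableEquiv.piFinSuccAbove]

theorem prekopaLeindler_volume (E : Type*) [NormedAddCommGroup E] [InnerProductSpace ℝ E]
    [FiniteDimensional ℝ E] [MeasurableSpace E] [BorelSpace E] :
    PrekopaLeindler (volume : Measure E) :=
  ((prekopaLeindler_pi (Module.finrank ℝ E)).of_measurePreserving
    (WithLp.linearEquiv 2 ℝ (Fin (Module.finrank ℝ E) → ℝ)).symm.toLinearMap
    (PiLp.volume_preserving_toLp _)).of_measurePreserving
    (stdOrthonormalBasis ℝ E).repr.symm.toLinearEquiv.toLinearMap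
    (stdOrthonormalBasis ℝ E).measurePreserving_repr_symm

/-! ### The heat kernel -/

section HeatKernel

variable {E : Type*} [NormedAddCommGroup E] [InnerProductSpace ℝ E]

theorem sq_norm_smul_add_smul {a b : ℝ} (hab : a + b = 1) (x y : E) :
    ‖a • x + b • y‖ ^ 2 = a * ‖x‖ ^ 2 + b * ‖y‖ ^ 2 - a * b * ‖x - y‖ ^ 2 := by
  obtain rfl : b = 1 - a := eq_sub_of_add_eq' hab
  rw [norm_add_sq_real, norm_sub_sq_real, norm_smul, norm_smul, inner_smul_left, inner_smul_right,
    mul_pow, mul_pow]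
  simp only [Real.norm_eq_abs, sq_abs, conj_trivial]
  ring

/-- The heat kernel of the equation `∂ᵤ p = Δp` (without the factor `1/2` of Brownian motion), so
that `heatKernel u x` is the Gaussian density of mean `x` and covariance `2u • id`. -/
noncomputable def heatKernel (u : ℝ) (x y : E) : ℝ :=
  (4 * π * u) ^ (-(Module.finrank ℝ E : ℝ) / 2) * exp (-‖x - y‖ ^ 2 / (4 * u))

variable {u : ℝ}

theorem heatKernel_pos (hu : 0 < u) (x y : E) : 0 < heatKernel u x y := by
  unfold heatKernel
  positivity

theorem heatKernel_rpow_mul_heatKernel_rpow (hu : 0 < u) {a b : ℝ} (hab : a + b = 1) (x y z : E) :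
    heatKernel u x y ^ a * heatKernel u x z ^ b =
      heatKernel u x (a • y + b • z) * exp (-(a * b * ‖y - z‖ ^ 2 / (4 * u))) := by
  have hxyz : x - (a • y + b • z) = a • (x - y) + b • (x - z) := by
    obtain rfl : b = 1 - a := eq_sub_of_add_eq' hab
    module
  have hnorm := sq_norm_smul_add_smul hab (x - y) (x - z)
  rw [← hxyz, sub_sub_sub_cancel_left, norm_sub_rev z y] at hnorm
  simp only [heatKernel]
  set c := (4 * π * u) ^ (-(Module.finrank ℝ E : ℝ) / 2)
  have hc : 0 < c := by positivity
  rw [mul_rpow hc.le (exp_nonneg _), mul_rpow hc.le (exp_nonneg _), mul_mul_mul_comm,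
    ← rpow_add hc, hab, rpow_one, mul_assoc, ← exp_mul, ← exp_mul, ← exp_add, ← exp_add, hnorm]
  ring_nf

variable [MeasurableSpace E] [BorelSpace E]

theorem measurable_heatKernel (u : ℝ) (x : E) : Measurable (heatKernel u x) := by
  unfold heatKernel
  fun_prop

variable [FiniteDimensional ℝ E]

/-- The Gaussian measure with density `heatKernel u x`, against which `heat` integrates. -/
noncomputable def heatMeasure (u : ℝ) (x : E) : Measure E :=
  volume.withDensity fun y => ENNReal.ofReal (heatKernel u x y)

theorem integral_heatKernel (hu : 0 < u) (x : E) : ∫ y, heatKernel u x y = 1 := by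
  have hgauss : ∫ y : E, exp (-‖x - y‖ ^ 2 / (4 * u)) =
      (4 * π * u) ^ ((Module.finrank ℝ E : ℝ) / 2) := by
    calc ∫ y : E, exp (-‖x - y‖ ^ 2 / (4 * u)) = ∫ y : E, exp (-(4 * u)⁻¹ * ‖y‖ ^ 2) := by
          rw [integral_sub_left_eq_self (fun y : E => exp (-‖y‖ ^ 2 / (4 * u))) volume x]
          simp only [div_eq_inv_mul, mul_neg, neg_mul]
      _ = (π / (4 * u)⁻¹) ^ ((Module.finrank ℝ E : ℝ) / 2) :=
          GaussianFourier.integral_rexp_neg_mul_sq_norm (by positivity)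
      _ = (4 * π * u) ^ ((Module.finrank ℝ E : ℝ) / 2) := by
          rw [div_inv_eq_mul, mul_left_comm, ← mul_assoc]
  simp only [heatKernel]
  rw [integral_const_mul, hgauss, neg_div, ← rpow_add (by positivity), neg_add_cancel, rpow_zero]

theorem isProbabilityMeasure_heatMeasure (hu : 0 < u) (x : E) :
    IsProbabilityMeasure (heatMeasure u x) := by
  have hint : Integrable (heatKernel u x) :=
    .of_integral_ne_zero (by simp [integral_heatKernel hu x])
  constructor
  rw [heatMeasure, withDensity_apply _ .univ, Measure.restrict_univ,
    ← ofReal_integral_eq_lintegral_ofReal hint (.of_forall fun y => (heatKernel_pos hu x y).le),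
    integral_heatKernel hu x, ENNReal.ofReal_one]

theorem integral_heatMeasure (hu : 0 < u) (x : E) (f : E → ℝ) :
    ∫ y, f y ∂heatMeasure u x = ∫ y, heatKernel u x y * f y := by
  rw [heatMeasure, integral_withDensity_eq_integral_toReal_smul
    (measurable_heatKernel u x).ennreal_ofReal (.of_forall fun _ => ENNReal.ofReal_lt_top)]
  simp only [ENNReal.toReal_ofReal (heatKernel_pos hu x _).le, smul_eq_mul]

theorem integrable_exp_mul_heatMeasure (hu : 0 < u) (x : E) {f : E → ℝ} (hf : Measurable f)
    {C : ℝ} (hC : ∀ y, |f y| ≤ C) (q : ℝ) :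
    Integrable (fun y => exp (q * f y)) (heatMeasure u x) :=
  have := isProbabilityMeasure_heatMeasure hu x
  ProbabilityTheory.integrable_exp_mul_of_mem_Icc hf.aemeasurable
    (.of_forall fun y => abs_le.1 (hC y))

theorem rpow_lintegral_heatMeasure_mul_rpow_le (hu : 0 < u) (x : E) {a b : ℝ} (ha : 0 < a)
    (hb : 0 < b) (hab : a + b = 1) {f g h : E → ℝ≥0∞}
    (hf : Measurable f) (hg : Measurable g) (hh : Measurable h)
    (H : ∀ y z, f y ^ a * g z ^ b ≤
      ENNReal.ofReal (exp (a * b * ‖y - z‖ ^ 2 / (4 * u))) * h (a • y + b • z)) :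
    (∫⁻ y, f y ∂heatMeasure u x) ^ a * (∫⁻ y, g y ∂heatMeasure u x) ^ b ≤
      ∫⁻ y, h y ∂heatMeasure u x := by
  refine (prekopaLeindler_volume E).lintegral_withDensity_le
    (measurable_heatKernel u x).ennreal_ofReal ha hb hab hf hg hh fun y z => ?_
  set w := a • y + b • z
  set d := a * b * ‖y - z‖ ^ 2 / (4 * u)
  have hk (v : E) := heatKernel_pos hu x v
  calc ENNReal.ofReal (heatKernel u x y) ^ a * ENNReal.ofReal (heatKernel u x z) ^ b *
        (f y ^ a * g z ^ b)
      = ENNReal.ofReal (heatKernel u x w * exp (-d)) * (f y ^ a * g z ^ b) := by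
        rw [ENNReal.ofReal_rpow_of_pos (hk y), ENNReal.ofReal_rpow_of_pos (hk z),
          ← ENNReal.ofReal_mul (rpow_nonneg (hk y).le a),
          heatKernel_rpow_mul_heatKernel_rpow hu hab]
    _ ≤ ENNReal.ofReal (heatKernel u x w * exp (-d)) * (ENNReal.ofReal (exp d) * h w) :=
        mul_le_mul' le_rfl (H y z)
    _ = ENNReal.ofReal (heatKernel u x w) * h w := by
        rw [← mul_assoc, ← ENNReal.ofReal_mul (mul_pos (hk w) (exp_pos _)).le, mul_assoc,
          ← exp_add, neg_add_cancel, exp_zero, mul_one]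

end HeatKernel

theorem heat_eq_integral_heatMeasure {n : ℕ} {u : ℝ} (hu : 0 < u)
    (f : EuclideanSpace ℝ (Fin n) → ℝ) (x : EuclideanSpace ℝ (Fin n)) :
    heat n u f x = ∫ y, f y ∂heatMeasure u x := by
  rw [heat, if_neg hu.ne', integral_heatMeasure hu, ← integral_const_mul]
  simp only [heatKernel, finrank_euclideanSpace_fin, mul_assoc, mul_comm (f _)]

/-! ### The Hopf–Lax semigroup -/

theorem bddBelow_range_add_sq_norm_sub_div {E : Type*} [SeminormedAddCommGroup E] {f : E → ℝ}
    {t : ℝ} (ht : 0 ≤ t) (hf : BddBelow (Set.range f)) (y : E) :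
    BddBelow (Set.range fun z => f z + ‖y - z‖ ^ 2 / (2 * t)) :=
  hf.range_mono _ fun _ => le_add_of_nonneg_right (by positivity)

section HopfLax

variable {n : ℕ} {u t q₁ q₂ : ℝ} {f : EuclideanSpace ℝ (Fin n) → ℝ}

theorem hopfLax_le {y : EuclideanSpace ℝ (Fin n)}
    (hf : BddBelow (Set.range fun z => f z + ‖y - z‖ ^ 2 / (2 * t)))
    (z : EuclideanSpace ℝ (Fin n)) : hopfLax n t f y ≤ f z + ‖y - z‖ ^ 2 / (2 * t) :=
  ciInf_le hf z

theorem upperSemicontinuous_hopfLax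
    (hf : ∀ y, BddBelow (Set.range fun z => f z + ‖y - z‖ ^ 2 / (2 * t))) :
    UpperSemicontinuous (hopfLax n t f) :=
  upperSemicontinuous_ciInf hf fun _ => Continuous.upperSemicontinuous (by fun_prop)

theorem exists_lowerSemicontinuous_le_hopfLax_le
    (hf : ∀ y, BddBelow (Set.range fun z => f z + ‖y - z‖ ^ 2 / (2 * t))) :
    ∃ g : EuclideanSpace ℝ (Fin n) → ℝ, LowerSemicontinuous g ∧ g ≤ f ∧
      ∀ y z, hopfLax n t f y ≤ g z + ‖y - z‖ ^ 2 / (2 * t) := by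
  have hle (z y) : hopfLax n t f y - ‖y - z‖ ^ 2 / (2 * t) ≤ f z :=
    sub_le_iff_le_add.2 (hopfLax_le (hf y) z)
  have hbdd (z) : BddAbove (Set.range fun y => hopfLax n t f y - ‖y - z‖ ^ 2 / (2 * t)) :=
    ⟨f z, Set.forall_mem_range.2 (hle z)⟩
  -- The backward transform of `hopfLax n t f` is a measurable substitute for `f`.
  exact ⟨fun z => ⨆ y, (hopfLax n t f y - ‖y - z‖ ^ 2 / (2 * t)),
    lowerSemicontinuous_ciSup hbdd fun _ => Continuous.lowerSemicontinuous (by fun_prop),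
    fun z => ciSup_le (hle z), fun y z => sub_le_iff_le_add.1 (le_ciSup (hbdd z) y)⟩

theorem mul_le_add_mul_of_forall_le_add_sq_norm_div {E : Type*} [SeminormedAddCommGroup E]
    [NormedSpace ℝ E] {φ ψ : E → ℝ} (hφψ : ∀ y w, φ y ≤ ψ w + ‖y - w‖ ^ 2 / (2 * t))
    (hu : 0 < u) (ht : 0 < t) (hq₂ : 0 < q₂) (hrel : q₁ = q₂ + t / (2 * u))
    {a b : ℝ} (hab : a + b = 1) (ha : a = q₂ / q₁) (y z : E) :
    q₂ * φ y ≤ a * b * ‖y - z‖ ^ 2 / (4 * u) + q₂ * ψ (a • y + b • z) := by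
  have hq₁ : 0 < q₁ := hrel ▸ by positivity
  have hbq : b * q₁ = t / (2 * u) := by
    rw [eq_sub_of_add_eq' hab, ha, sub_mul, div_mul_cancel₀ _ hq₁.ne', hrel]
    ring
  have hb : b ≠ 0 := left_ne_zero_of_mul (hbq.trans_ne (by positivity))
  have htu : t = 2 * u * (b * q₁) := by
    rw [hbq]
    field_simp
  have hyz : y - (a • y + b • z) = b • (y - z) := by
    obtain rfl : a = 1 - b := eq_sub_of_add_eq hab
    module
  calc q₂ * φ y
      ≤ q₂ * (ψ (a • y + b • z) + ‖y - (a • y + b • z)‖ ^ 2 / (2 * t)) := by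
        gcongr
        exact hφψ _ _
    _ = a * b * ‖y - z‖ ^ 2 / (4 * u) + q₂ * ψ (a • y + b • z) := by
        rw [hyz, norm_smul, mul_pow, norm_eq_abs, sq_abs, htu, ha]
        field_simp [hb]
        ring

theorem rpow_lintegral_exp_hopfLax_le (hu : 0 < u) (ht : 0 < t) (hq₂ : 0 < q₂)
    (hrel : q₁ = q₂ + t / (2 * u))
    (hf : ∀ y, BddBelow (Set.range fun z => f z + ‖y - z‖ ^ 2 / (2 * t)))
    (x : EuclideanSpace ℝ (Fin n)) :
    (∫⁻ y, ENNReal.ofReal (exp (q₁ * hopfLax n t f y)) ∂heatMeasure u x) ^ (q₂ / q₁) ≤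
      ∫⁻ y, ENNReal.ofReal (exp (q₂ * f y)) ∂heatMeasure u x := by
  have := isProbabilityMeasure_heatMeasure hu x
  have hq₁ : 0 < q₁ := hrel ▸ by positivity
  have hq : q₂ < q₁ := hrel ▸ lt_add_of_pos_right q₂ (by positivity)
  have hb : 0 < 1 - q₂ / q₁ := sub_pos.2 ((div_lt_one hq₁).2 hq)
  obtain ⟨g, hg, hgf, hQg⟩ := exists_lowerSemicontinuous_le_hopfLax_le hf
  calc (∫⁻ y, ENNReal.ofReal (exp (q₁ * hopfLax n t f y)) ∂heatMeasure u x) ^ (q₂ / q₁)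
      = (∫⁻ y, ENNReal.ofReal (exp (q₁ * hopfLax n t f y)) ∂heatMeasure u x) ^ (q₂ / q₁) *
          (∫⁻ _, 1 ∂heatMeasure u x) ^ (1 - q₂ / q₁) := by simp
    _ ≤ ∫⁻ y, ENNReal.ofReal (exp (q₂ * g y)) ∂heatMeasure u x := by
        refine rpow_lintegral_heatMeasure_mul_rpow_le hu x (div_pos hq₂ hq₁) hb
          (add_sub_cancel _ _)
          ((upperSemicontinuous_hopfLax hf).measurable.const_mul q₁).exp.ennreal_ofReal
          measurable_const (hg.measurable.const_mul q₂).exp.ennreal_ofReal fun y z => ?_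
        rw [ENNReal.one_rpow, mul_one, ENNReal.ofReal_rpow_of_pos (exp_pos _), ← exp_mul,
          mul_right_comm, mul_div_cancel₀ _ hq₁.ne', ← ENNReal.ofReal_mul (exp_nonneg _), ← exp_add]
        gcongr
        exact mul_le_add_mul_of_forall_le_add_sq_norm_div hQg hu ht hq₂ hrel (add_sub_cancel _ _)
          rfl y z
    _ ≤ ∫⁻ y, ENNReal.ofReal (exp (q₂ * f y)) ∂heatMeasure u x := by
        gcongr with y
        exact hgf y

theorem rpow_integral_exp_hopfLax_le (hu : 0 < u) (ht : 0 < t) (hq₂ : 0 < q₂)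
    (hrel : q₁ = q₂ + t / (2 * u))
    (hf : ∀ y, BddBelow (Set.range fun z => f z + ‖y - z‖ ^ 2 / (2 * t)))
    (x : EuclideanSpace ℝ (Fin n))
    (hint : Integrable (fun y => exp (q₂ * f y)) (heatMeasure u x)) :
    (∫ y, exp (q₁ * hopfLax n t f y) ∂heatMeasure u x) ^ (q₂ / q₁) ≤
      ∫ y, exp (q₂ * f y) ∂heatMeasure u x := by
  rw [integral_eq_lintegral_of_nonneg_ae (.of_forall fun _ => exp_nonneg _)
      ((upperSemicontinuous_hopfLax hf).measurable.const_mul q₁).exp.aestronglyMeasurable,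
    integral_eq_lintegral_of_nonneg_ae (.of_forall fun _ => exp_nonneg _) hint.aestronglyMeasurable,
    ENNReal.toReal_rpow]
  exact ENNReal.toReal_mono hint.lintegral_lt_top.ne
    (rpow_lintegral_exp_hopfLax_le hu ht hq₂ hrel hf x)

end HopfLax

theorem local_hypercontractivity_hamilton_jacobi_general (n : ℕ)
    {u t : ℝ} (hu : 0 < u) (ht : 0 < t)
    {q₁ q₂ : ℝ} (hq₂ : 0 < q₂) (hrel : q₁ = q₂ + t / (2 * u))
    {f : EuclideanSpace ℝ (Fin n) → ℝ}
    (hf : ∀ y, BddBelow (Set.range fun z => f z + ‖y - z‖ ^ 2 / (2 * t)))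
    (x : EuclideanSpace ℝ (Fin n))
    (hint : Integrable (fun y => exp (q₂ * f y)) (heatMeasure u x)) :
    (heat n u (fun y => exp (q₁ * hopfLax n t f y)) x) ^ (1 / q₁) ≤
      (heat n u (fun y => exp (q₂ * f y)) x) ^ (1 / q₂) := by
  have hexp : 1 / q₁ = q₂ / q₁ * (1 / q₂) := by field_simp
  have hnonneg : 0 ≤ ∫ y, exp (q₁ * hopfLax n t f y) ∂heatMeasure u x :=
    integral_nonneg fun _ => exp_nonneg _
  rw [heat_eq_integral_heatMeasure hu, heat_eq_integral_heatMeasure hu, hexp, rpow_mul hnonneg]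
  exact rpow_le_rpow (rpow_nonneg hnonneg _)
    (rpow_integral_exp_hopfLax_le hu ht hq₂ hrel hf x hint) (one_div_pos.2 hq₂).le

theorem local_hypercontractivity_hamilton_jacobi (n : ℕ) (hn : 1 ≤ n)
    (u t : ℝ) (hu : 0 < u) (ht : 0 < t)
    (q₁ q₂ : ℝ) (hq₂ : 0 < q₂) (hq : q₂ < q₁) (hrel : q₁ = q₂ + t / (2 * u))
    (f : EuclideanSpace ℝ (Fin n) → ℝ) (L : NNReal) (hLip : LipschitzWith L f)
    (C : ℝ) (hbd : ∀ x, |f x| ≤ C)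
    (x : EuclideanSpace ℝ (Fin n)) :
    (heat n u (fun y => Real.exp (q₁ * hopfLax n t f y)) x) ^ (1 / q₁) ≤
      (heat n u (fun y => Real.exp (q₂ * f y)) x) ^ (1 / q₂) :=
  local_hypercontractivity_hamilton_jacobi_general n hu ht hq₂ hrel
    (bddBelow_range_add_sq_norm_sub_div ht.le ⟨-C, Set.forall_mem_range.2 fun y =>
      (abs_le.1 (hbd y)).1⟩) x
    (integrable_exp_mul_heatMeasure hu x hLip.continuous.measurable hbd q₂)
end
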